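/- arXiv:2010.00952 — 3 statements merged into one kernel-verified Lean document; each statement's English description precedes it below -/
import Mathlib

section
/- Theorem 1(ii), ergodic O(1/k) rate of the PD3O algorithm: Suppose the stepsizes are constant, γ_k ≡ γ ∈ (0, 2/L_F), and η ≥ ‖K‖². Define, for every k ≥ 1, the weighted ergodic iterate x̄^k = (2/(k(k+1))) Σ_{i=1}^{k} i·x^i. Then Ψ(x̄^k) − Ψ(x*) = O(1/k); that is, there exists a constant C ≥ 0 such that Ψ(x̄^k) − Ψ(x*) ≤ C/k for every k ≥ 1. -/
open Filter Topology RealInnerProductSpace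

noncomputable section

/-- `p` is a minimizer of `y ↦ σ·G(y) + (1/2)‖y − z‖²`, i.e. `p = prox_{σG}(z)`
(the minimizer is unique when `G` is convex). -/
def IsProxPt {E : Type*} [NormedAddCommGroup E] [InnerProductSpace ℝ E]
    (σ : ℝ) (G : E → ℝ) (z p : E) : Prop :=
  ∀ y, σ * G p + ‖p - z‖ ^ 2 / 2 ≤ σ * G y + ‖y - z‖ ^ 2 / 2

/-- `u ∈ ∂G(z)`. -/
def IsSubgradientAt {E : Type*} [NormedAddCommGroup E] [InnerProductSpace ℝ E]
    (G : E → ℝ) (z u : E) : Prop :=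
  ∀ y, G z + ⟪u, y - z⟫ ≤ G y

/-- The optimality condition of a proximal point. -/
lemma prox_subgradient {E : Type*} [NormedAddCommGroup E] [InnerProductSpace ℝ E]
    {σ : ℝ} (hσ : 0 < σ) {G : E → ℝ} (hG : ConvexOn ℝ Set.univ G) {z p : E}
    (h : IsProxPt σ G z p) : IsSubgradientAt G p ((1 / σ) • (z - p)) := by
  intro y
  have key : ∀ t : ℝ, 0 < t → t ≤ 1 →
      σ * (G p - G y) ≤ ⟪p - z, y - p⟫ + t / 2 * ‖y - p‖ ^ 2 := by
    intro t ht ht1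
    have h1 := h (p + t • (y - p))
    have h2 := hG.2 (Set.mem_univ p) (Set.mem_univ y) (by linarith : 0 ≤ 1 - t) ht.le (by ring)
    have e : (1 - t) • p + t • y = p + t • (y - p) := by module
    rw [e] at h2
    simp only [smul_eq_mul] at h2
    have e2 : p + t • (y - p) - z = (p - z) + t • (y - p) := by abel
    rw [e2, norm_add_sq_real, inner_smul_right, norm_smul, mul_pow, Real.norm_eq_abs, sq_abs] at h1
    have h3 := mul_le_mul_of_nonneg_left h2 hσ.le
    have h4 : t * (σ * (G p - G y)) ≤ t * (⟪p - z, y - p⟫ + t / 2 * ‖y - p‖ ^ 2) := by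
      nlinarith
    exact le_of_mul_le_mul_left h4 ht
  have lim : σ * (G p - G y) ≤ ⟪p - z, y - p⟫ := by
    have ht : Tendsto (fun t : ℝ => ⟪p - z, y - p⟫ + t / 2 * ‖y - p‖ ^ 2) (𝓝[>] 0)
        (𝓝 (⟪p - z, y - p⟫ + 0 / 2 * ‖y - p‖ ^ 2)) := by
      apply Tendsto.mono_left _ nhdsWithin_le_nhds
      apply Continuous.tendsto
      fun_prop
    have := ge_of_tendsto ht (b := σ * (G p - G y)) (by
      filter_upwards [Ioc_mem_nhdsGT (zero_lt_one' ℝ)] with t h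
      exact key t h.1 h.2)
    simpa using this
  have e : ⟪(1 / σ) • (z - p), y - p⟫ = -(1 / σ * ⟪p - z, y - p⟫) := by
    rw [inner_smul_left, ← neg_sub p z, inner_neg_left]; simp
  rw [e]
  have : G p - G y ≤ 1 / σ * ⟪p - z, y - p⟫ := by
    rw [one_div, ← div_eq_inv_mul, le_div_iff₀ hσ]; linarith
  linarith

lemma line_deriv {E : Type*} [NormedAddCommGroup E] [InnerProductSpace ℝ E] [CompleteSpace E]
    {F : E → ℝ} {F' : E → E} (hF : ∀ z, HasGradientAt F (F' z) z) (x d : E) (t : ℝ) :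
    HasDerivAt (fun t : ℝ => F (x + t • d)) ⟪F' (x + t • d), d⟫ t := by
  have h1 := (hF (x + t • d)).hasFDerivAt
  have h2 : HasDerivAt (fun t : ℝ => x + t • d) d t := by
    simpa using ((hasDerivAt_id t).smul_const d).const_add x
  have h3 := h1.comp_hasDerivAt t h2
  rw [InnerProductSpace.toDual_apply_apply] at h3
  exact h3

lemma grad_subgradient {E : Type*} [NormedAddCommGroup E] [InnerProductSpace ℝ E]
    [CompleteSpace E]
    {F : E → ℝ} {F' : E → E} (hF : ∀ z, HasGradientAt F (F' z) z)
    (hc : ConvexOn ℝ Set.univ F) (x : E) : IsSubgradientAt F x (F' x) := by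
  intro y
  have h := line_deriv hF x (y - x) 0
  rw [hasDerivAt_iff_tendsto_slope] at h
  have h' : Tendsto (slope (fun t : ℝ => F (x + t • (y - x))) 0) (𝓝[>] 0)
      (𝓝 ⟪F' (x + (0 : ℝ) • (y - x)), y - x⟫) :=
    h.mono_left (nhdsWithin_mono _ (fun t ht => ne_of_gt ht))
  have := le_of_tendsto h' (b := F y - F x) (by
    filter_upwards [Ioc_mem_nhdsGT (zero_lt_one' ℝ)] with t ht
    have h2 := hc.2 (Set.mem_univ x) (Set.mem_univ y) (by linarith [ht.2] : 0 ≤ 1 - t) ht.1.le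
      (by ring)
    have e : (1 - t) • x + t • y = x + t • (y - x) := by module
    rw [e] at h2
    simp only [smul_eq_mul] at h2
    rw [slope_def_field]
    simp only [zero_smul, add_zero, sub_zero]
    rw [div_le_iff₀ ht.1]
    linarith)
  simp only [zero_smul, add_zero] at this
  linarith

lemma descent {E : Type*} [NormedAddCommGroup E] [InnerProductSpace ℝ E]
    [CompleteSpace E] {L : ℝ} 
    {F : E → ℝ} {F' : E → E} (hF : ∀ z, HasGradientAt F (F' z) z)
    (hl : ∀ z z', ‖F' z - F' z'‖ ≤ L * ‖z - z'‖) (x d : E) :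
    F (x + d) ≤ F x + ⟪F' x, d⟫ + L / 2 * ‖d‖ ^ 2 := by
  have hd : ∀ t : ℝ, HasDerivAt
      (fun t : ℝ => F (x + t • d) - t * ⟪F' x, d⟫ - t ^ 2 * (L / 2 * ‖d‖ ^ 2))
      (⟪F' (x + t • d), d⟫ - ⟪F' x, d⟫ - 2 * t * (L / 2 * ‖d‖ ^ 2)) t := by
    intro t
    have h1 := (line_deriv hF x d t).sub ((hasDerivAt_id t).mul_const ⟪F' x, d⟫)
    have h2 := h1.sub ((hasDerivAt_pow 2 t).mul_const (L / 2 * ‖d‖ ^ 2))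
    have e : ⟪F' (x + t • d), d⟫ - 1 * ⟪F' x, d⟫ - ((2 : ℕ) : ℝ) * t ^ (2 - 1) * (L / 2 * ‖d‖ ^ 2)
        = ⟪F' (x + t • d), d⟫ - ⟪F' x, d⟫ - 2 * t * (L / 2 * ‖d‖ ^ 2) := by simp
    rw [← e]
    exact h2
  have anti := antitoneOn_of_deriv_nonpos (convex_Icc (0 : ℝ) 1)
    (fun t _ => (hd t).continuousAt.continuousWithinAt)
    (fun t _ => (hd t).differentiableAt.differentiableWithinAt)
    (fun t ht => by
      rw [interior_Icc] at ht
      rw [(hd t).deriv, ← inner_sub_left]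
      have h1 := real_inner_le_norm (F' (x + t • d) - F' x) d
      have h2 := hl (x + t • d) x
      rw [add_sub_cancel_left, norm_smul, Real.norm_eq_abs, abs_of_pos ht.1] at h2
      have h3 := mul_le_mul_of_nonneg_right h2 (norm_nonneg d)
      nlinarith)
  have := anti (by simp : (0 : ℝ) ∈ Set.Icc (0 : ℝ) 1) (by simp : (1 : ℝ) ∈ Set.Icc (0 : ℝ) 1)
    zero_le_one
  simp at this
  linarith

lemma cocoercive_half {E : Type*} [NormedAddCommGroup E] [InnerProductSpace ℝ E]
    [CompleteSpace E] {L : ℝ} (hL : 0 < L)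
    {F : E → ℝ} {F' : E → E} (hF : ∀ z, HasGradientAt F (F' z) z)
    (hc : ConvexOn ℝ Set.univ F)
    (hl : ∀ z z', ‖F' z - F' z'‖ ≤ L * ‖z - z'‖) (x z : E) :
    F x + ⟪F' x, z - x⟫ + 1 / (2 * L) * ‖F' z - F' x‖ ^ 2 ≤ F z := by
  have h1 := descent hF hl z (-((1 / L) • (F' z - F' x)))
  have h2 := grad_subgradient hF hc x (z + -((1 / L) • (F' z - F' x)))
  have e : z + -((1 / L) • (F' z - F' x)) - x = (z - x) - (1 / L) • (F' z - F' x) := by abel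
  rw [e, inner_sub_right, inner_smul_right] at h2
  rw [norm_neg, norm_smul, inner_neg_right, inner_smul_right, mul_pow, Real.norm_eq_abs,
    sq_abs] at h1
  have e3 : ⟪F' z, F' z - F' x⟫ = ⟪F' x, F' z - F' x⟫ + ‖F' z - F' x‖ ^ 2 := by
    rw [← real_inner_self_eq_norm_sq, ← inner_add_left]; congr 1; abel
  rw [e3] at h1
  have e4 : L / 2 * ((1 / L) ^ 2 * ‖F' z - F' x‖ ^ 2) = 1 / (2 * L) * ‖F' z - F' x‖ ^ 2 := by
    field_simp
  have e5 : 1 / L * ‖F' z - F' x‖ ^ 2 = 2 * (1 / (2 * L) * ‖F' z - F' x‖ ^ 2) := by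
    field_simp
  rw [mul_add, e4, e5] at h1
  linarith

lemma cocoercive {E : Type*} [NormedAddCommGroup E] [InnerProductSpace ℝ E]
    [CompleteSpace E] {L : ℝ} (hL : 0 < L)
    {F : E → ℝ} {F' : E → E} (hF : ∀ z, HasGradientAt F (F' z) z)
    (hc : ConvexOn ℝ Set.univ F)
    (hl : ∀ z z', ‖F' z - F' z'‖ ≤ L * ‖z - z'‖) (z x : E) :
    1 / L * ‖F' z - F' x‖ ^ 2 ≤ ⟪F' z - F' x, z - x⟫ := by
  have h1 := cocoercive_half hL hF hc hl x z
  have h2 := cocoercive_half hL hF hc hl z x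
  rw [norm_sub_rev, ← neg_sub z x, inner_neg_right] at h2
  have e5 : 1 / L * ‖F' z - F' x‖ ^ 2 = 2 * (1 / (2 * L) * ‖F' z - F' x‖ ^ 2) := by
    field_simp
  rw [e5, inner_sub_left]
  linarith

lemma subgradient_mono {E : Type*} [NormedAddCommGroup E] [InnerProductSpace ℝ E]
    {G : E → ℝ} {z z' v v' : E} (h : IsSubgradientAt G z v) (h' : IsSubgradientAt G z' v') :
    0 ≤ ⟪v - v', z - z'⟫ := by
  have h1 := h z'
  have h2 := h' z
  rw [← neg_sub z z', inner_neg_right] at h1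
  rw [inner_sub_left]
  linarith

section
variable {𝒳 𝒰 : Type*}
    [NormedAddCommGroup 𝒳] [InnerProductSpace ℝ 𝒳] [FiniteDimensional ℝ 𝒳]
    [NormedAddCommGroup 𝒰] [InnerProductSpace ℝ 𝒰] [FiniteDimensional ℝ 𝒰]

/-- The quadratic form `‖q - K*u‖² + η‖u‖² - ‖K*u‖²`. -/
def lyap (K : 𝒳 →L[ℝ] 𝒰) (η : ℝ) (q : 𝒳) (u : 𝒰) : ℝ :=
  ‖q - (ContinuousLinearMap.adjoint K) u‖ ^ 2 + η * ‖u‖ ^ 2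
    - ‖(ContinuousLinearMap.adjoint K) u‖ ^ 2

lemma adj_le (K : 𝒳 →L[ℝ] 𝒰) {η : ℝ} (hη : ‖K‖ ^ 2 ≤ η) (u : 𝒰) :
    ‖(ContinuousLinearMap.adjoint K) u‖ ^ 2 ≤ η * ‖u‖ ^ 2 := by
  have h := (ContinuousLinearMap.adjoint K).le_opNorm u
  rw [LinearIsometryEquiv.norm_map] at h
  calc _ ≤ (‖K‖ * ‖u‖) ^ 2 := by gcongr
    _ = ‖K‖ ^ 2 * ‖u‖ ^ 2 := by ring
    _ ≤ _ := by gcongr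

lemma core (K : 𝒳 →L[ℝ] 𝒰) {γ η : ℝ} (hγ : 0 < γ) (hη : ‖K‖ ^ 2 ≤ η)
    (q q' x g : 𝒳) (u u' p : 𝒰) (hx : x = γ • (q' + g))
    (hp : p = K x - (γ * η) • (u' - u) + γ • K (q' - q)) :
    ⟪q - q' - (ContinuousLinearMap.adjoint K) u, x⟫ + ⟪u', p⟫ ≤
      γ / 2 * lyap K η q u - γ / 2 * lyap K η q' u' + γ / 2 * ‖g‖ ^ 2 := by
  have hM := adj_le K hη (u' - u)
  rw [map_sub] at hM
  have e1 : ⟪u', K x⟫ = ⟪(ContinuousLinearMap.adjoint K) u', x⟫ :=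
    (ContinuousLinearMap.adjoint_inner_left K x u').symm
  have e2 : ⟪u', K (q' - q)⟫ = ⟪(ContinuousLinearMap.adjoint K) u', q' - q⟫ :=
    (ContinuousLinearMap.adjoint_inner_left K _ u').symm
  have e3 : ⟪u', p⟫ = ⟪(ContinuousLinearMap.adjoint K) u', x⟫ - γ * η * ⟪u', u' - u⟫
      + γ * ⟪(ContinuousLinearMap.adjoint K) u', q' - q⟫ := by
    rw [hp, inner_add_right, inner_sub_right, inner_smul_right, inner_smul_right, e1, e2]
  unfold lyap
  rw [e3, hx]
  generalize (ContinuousLinearMap.adjoint K) u' = v' at *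
  generalize (ContinuousLinearMap.adjoint K) u = v at *
  obtain ⟨y, rfl⟩ : ∃ y, q = y + v := ⟨q - v, by abel⟩
  obtain ⟨y', rfl⟩ : ∃ y', q' = y' + v' := ⟨q' - v', by abel⟩
  have s1 : 0 ≤ ‖y' - y + g‖ ^ 2 := by positivity
  simp only [add_sub_cancel_right]
  simp only [← real_inner_self_eq_norm_sq, inner_add_left, inner_add_right, inner_sub_left,
    inner_sub_right, inner_smul_right] at *
  rw [real_inner_comm y y', real_inner_comm u u', real_inner_comm v v',
    real_inner_comm y g, real_inner_comm y' g] at *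
  have h1 := mul_nonneg hγ.le s1
  have h2 := mul_nonneg hγ.le (sub_nonneg.2 hM)
  simp only [real_inner_comm] at *
  nlinarith

lemma abel_sum {E : Type*} [AddCommGroup E] [Module ℝ E] (a : ℕ → E) (k : ℕ) :
    ∑ j ∈ Finset.range k, ((j : ℝ) + 1) • (a (j + 1) - a j) =
      (k : ℝ) • a k - ∑ j ∈ Finset.range k, a j := by
  induction k with
  | zero => simp
  | succ n ih =>
    rw [Finset.sum_range_succ, ih, Finset.sum_range_succ]
    push_cast
    module

lemma weight_sum (k : ℕ) (hk : 1 ≤ k) :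
    ∑ j ∈ Finset.range k, (2 / ((k : ℝ) * ((k : ℝ) + 1)) * ((j : ℝ) + 1)) = 1 := by
  have h : ∀ n : ℕ, ∑ j ∈ Finset.range n, ((j : ℝ) + 1) = (n : ℝ) * (n + 1) / 2 := by
    intro n
    induction n with
    | zero => simp
    | succ n ih => rw [Finset.sum_range_succ, ih]; push_cast; ring
  rw [← Finset.mul_sum, h]
  have : (0 : ℝ) < k := by exact_mod_cast hk
  field_simp

/-- The averaging argument, isolated from the algorithm. -/
lemma averaging (K : 𝒳 →L[ℝ] 𝒰) (F R : 𝒳 → ℝ) (H : 𝒰 → ℝ)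
    (hF : ConvexOn ℝ Set.univ F) (hR : ConvexOn ℝ Set.univ R) (hH : ConvexOn ℝ Set.univ H)
    (x : ℕ → 𝒳) (p a : ℕ → 𝒰) (W G : ℕ → ℝ) (P A B D X : ℝ)
    (hW0 : ∀ k, 0 ≤ W k) (hWB : ∀ k, W k ≤ B) (hG0 : ∀ k, 0 ≤ G k)
    (hGD : ∀ k, ∑ j ∈ Finset.range k, G j ≤ D)
    (hgap : ∀ k, F (x k) + R (x k) + H (p k) - P ≤ W k - W (k + 1) + G k)
    (hp : ∀ k, K (x k) - p k = a (k + 1) - a k) (ha : ∀ k, ‖a k‖ ≤ A)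
    (hX : ∀ k, ‖x k‖ ≤ X) :
    ∃ C : ℝ, 0 ≤ C ∧ ∀ k : ℕ, 1 ≤ k → ∀ z : 𝒳,
      z = (2 / ((k : ℝ) * ((k : ℝ) + 1))) • ∑ j ∈ Finset.range k, ((j : ℝ) + 1) • x j →
      F z + R z + H (K z) - P ≤ C / k := by
  have hA : 0 ≤ A := (norm_nonneg _).trans (ha 0)
  have hB : 0 ≤ B := (hW0 0).trans (hWB 0)
  have hD : 0 ≤ D := by simpa using hGD 0
  have hpX : ∀ k, ‖p k‖ ≤ ‖K‖ * X + 2 * A := by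
    intro k
    have e : p k = K (x k) - (a (k + 1) - a k) := by rw [← hp]; abel
    rw [e]
    have h1 := norm_sub_le (K (x k)) (a (k + 1) - a k)
    have h2 := norm_sub_le (a (k + 1)) (a k)
    have h3 := K.le_opNorm_of_le (hX k)
    linarith [ha k, ha (k + 1)]
  obtain ⟨Λ, hΛ⟩ := (hH.locallyLipschitz.locallyLipschitzOn
    (s := Metric.closedBall (0 : 𝒰) (‖K‖ * X + 2 * A))).exists_lipschitzOnWith_of_compact
      (isCompact_closedBall _ _)
  refine ⟨2 * (B + D) + Λ * (4 * A), by positivity, ?_⟩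
  intro k hk z hz
  have hk0 : (0 : ℝ) < k := by exact_mod_cast hk
  set c : ℝ := 2 / ((k : ℝ) * ((k : ℝ) + 1)) with hc
  have hc0 : 0 < c := by positivity
  have hck : c * k ≤ 2 / k := by
    rw [hc, div_mul_eq_mul_div, div_le_div_iff₀ (by positivity) hk0]
    nlinarith
  have hw0 : ∀ j ∈ Finset.range k, 0 ≤ c * ((j : ℝ) + 1) := fun j _ => by positivity
  have hw1 := weight_sum k hk
  have hz' : z = ∑ j ∈ Finset.range k, (c * ((j : ℝ) + 1)) • x j := by
    rw [hz, Finset.smul_sum]; simp only [smul_smul]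
  set pb : 𝒰 := ∑ j ∈ Finset.range k, (c * ((j : ℝ) + 1)) • p j with hpb
  have jF : F z ≤ ∑ j ∈ Finset.range k, (c * ((j : ℝ) + 1)) • F (x j) := by
    rw [hz']; exact hF.map_sum_le hw0 hw1 (fun _ _ => Set.mem_univ _)
  have jR : R z ≤ ∑ j ∈ Finset.range k, (c * ((j : ℝ) + 1)) • R (x j) := by
    rw [hz']; exact hR.map_sum_le hw0 hw1 (fun _ _ => Set.mem_univ _)
  have jH : H pb ≤ ∑ j ∈ Finset.range k, (c * ((j : ℝ) + 1)) • H (p j) :=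
    hH.map_sum_le hw0 hw1 (fun _ _ => Set.mem_univ _)
  have jP : P = ∑ j ∈ Finset.range k, (c * ((j : ℝ) + 1)) • P := by
    rw [← Finset.sum_smul, hw1, one_smul]
  have jall : F z + R z + H pb - P ≤
      c * ∑ j ∈ Finset.range k, ((j : ℝ) + 1) * (F (x j) + R (x j) + H (p j) - P) := by
    have : c * ∑ j ∈ Finset.range k, ((j : ℝ) + 1) * (F (x j) + R (x j) + H (p j) - P)
        = ∑ j ∈ Finset.range k, (c * ((j : ℝ) + 1)) • F (x j)
        + ∑ j ∈ Finset.range k, (c * ((j : ℝ) + 1)) • R (x j)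
        + ∑ j ∈ Finset.range k, (c * ((j : ℝ) + 1)) • H (p j)
        - ∑ j ∈ Finset.range k, (c * ((j : ℝ) + 1)) • P := by
      rw [← Finset.sum_add_distrib, ← Finset.sum_add_distrib, ← Finset.sum_sub_distrib,
        Finset.mul_sum]
      refine Finset.sum_congr rfl fun j _ => ?_
      simp only [smul_eq_mul]; ring
    rw [this, ← jP]; linarith
  have hS : ∑ j ∈ Finset.range k, ((j : ℝ) + 1) * (F (x j) + R (x j) + H (p j) - P)
      ≤ k * (B + D) := by
    have h1 : ∑ j ∈ Finset.range k, ((j : ℝ) + 1) * (F (x j) + R (x j) + H (p j) - P)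
        ≤ ∑ j ∈ Finset.range k, (-(((j : ℝ) + 1) • (W (j + 1) - W j)) + k * G j) := by
      refine Finset.sum_le_sum fun j hj => ?_
      have hj' : (j : ℝ) + 1 ≤ k := by exact_mod_cast Finset.mem_range.1 hj
      have h1 := mul_le_mul_of_nonneg_left (hgap j) (by positivity : (0 : ℝ) ≤ (j : ℝ) + 1)
      have h2 := mul_le_mul_of_nonneg_right hj' (hG0 j)
      simp only [smul_eq_mul]
      linarith
    rw [Finset.sum_add_distrib, Finset.sum_neg_distrib, abel_sum, ← Finset.mul_sum] at h1
    have h2 : ∑ j ∈ Finset.range k, W j ≤ k * B := by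
      have := Finset.sum_le_card_nsmul (Finset.range k) W B (fun j _ => hWB j)
      simpa using this
    have h3 := mul_le_mul_of_nonneg_left (hGD k) hk0.le
    have h4 := mul_nonneg hk0.le (hW0 k)
    simp only [smul_eq_mul] at h1
    linarith
  have hdiff : ‖K z - pb‖ ≤ c * (2 * k * A) := by
    have e : K z - pb = c • ((k : ℝ) • a k - ∑ j ∈ Finset.range k, a j) := by
      rw [← abel_sum, hz', hpb, map_sum, ← Finset.sum_sub_distrib, Finset.smul_sum]
      refine Finset.sum_congr rfl fun j _ => ?_
      rw [map_smul, ← smul_sub, hp, smul_smul]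
    rw [e, norm_smul, Real.norm_eq_abs, abs_of_pos hc0]
    gcongr
    have h1 := norm_sub_le ((k : ℝ) • a k) (∑ j ∈ Finset.range k, a j)
    have h2 : ‖∑ j ∈ Finset.range k, a j‖ ≤ k * A := by
      have := norm_sum_le_of_le (Finset.range k) (f := a) (n := fun _ => A) (fun j _ => ha j)
      simpa using this
    rw [norm_smul, Real.norm_eq_abs, abs_of_pos hk0] at h1
    have h3 := mul_le_mul_of_nonneg_left (ha k) hk0.le
    linarith
  have mem1 : pb ∈ Metric.closedBall (0 : 𝒰) (‖K‖ * X + 2 * A) :=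
    (convex_closedBall _ _).sum_mem hw0 hw1 (fun j _ => by simpa using hpX j)
  have mem2 : K z ∈ Metric.closedBall (0 : 𝒰) (‖K‖ * X + 2 * A) := by
    have e : K z = ∑ j ∈ Finset.range k, (c * ((j : ℝ) + 1)) • K (x j) := by
      rw [hz', map_sum]; simp only [map_smul]
    rw [e]
    refine (convex_closedBall _ _).sum_mem hw0 hw1 (fun j _ => ?_)
    have h3 := K.le_opNorm_of_le (hX j)
    rw [mem_closedBall_zero_iff]
    linarith
  have hl := hΛ.dist_le_mul _ mem2 _ mem1
  rw [dist_eq_norm, dist_eq_norm, Real.norm_eq_abs] at hl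
  have hl2 := (le_abs_self _).trans hl
  have hl3 := mul_le_mul_of_nonneg_left hdiff Λ.2
  have hS2 := mul_le_mul_of_nonneg_left hS hc0.le
  have t1 : c * (k * (B + D)) ≤ 2 / k * (B + D) := by
    rw [← mul_assoc]; gcongr
  have t2 : c * (2 * k * A) ≤ 2 / k * (2 * A) := by
    calc c * (2 * k * A) = c * k * (2 * A) := by ring
      _ ≤ _ := by gcongr
  have t3 := mul_le_mul_of_nonneg_left t2 Λ.2
  have e : (2 * (B + D) + Λ * (4 * A)) / k = 2 / k * (B + D) + Λ * (2 / k * (2 * A)) := by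
    field_simp; ring
  rw [e]
  change H (K z) - H pb ≤ (Λ : ℝ) * ‖K z - pb‖ at hl2
  change (Λ : ℝ) * ‖K z - pb‖ ≤ Λ * _ at hl3
  change (Λ : ℝ) * _ ≤ Λ * _ at t3
  linarith

lemma main_pos
    (K : 𝒳 →L[ℝ] 𝒰)
    (F R : 𝒳 → ℝ) (H : 𝒰 → ℝ) (F' : 𝒳 → 𝒳) (L_F : ℝ)
    (hLF : 0 < L_F)
    (hFconv : ConvexOn ℝ Set.univ F)
    (hRconv : ConvexOn ℝ Set.univ R)
    (hHconv : ConvexOn ℝ Set.univ H)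
    (hFgrad : ∀ z, HasGradientAt F (F' z) z)
    (hFlip : ∀ z z', ‖F' z - F' z'‖ ≤ L_F * ‖z - z'‖)
    (xstar : 𝒳) (rstar : 𝒳) (hstar : 𝒰)
    (hrstar : IsSubgradientAt R xstar rstar)
    (hhstar : IsSubgradientAt H (K xstar) hstar)
    (hopt : F' xstar + rstar + (ContinuousLinearMap.adjoint K) hstar = 0)
    (γ η : ℝ) (hγ0 : 0 < γ) (hγ2 : γ < 2 / L_F) (hη0 : 0 < η) (hη : ‖K‖ ^ 2 ≤ η)
    (x q : ℕ → 𝒳) (u : ℕ → 𝒰)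
    (hx : ∀ k, IsProxPt γ R
      (γ • (q k - (ContinuousLinearMap.adjoint K) (u k))) (x (k+1)))
    (hq : ∀ k, q (k+1) = (1/γ) • x (k+1) - F' (x (k+1)))
    (hu : ∀ k, ∃ p, IsProxPt (γ*η) H
        ((γ*η) • (u k + (1/η) • K ((1/γ) • x (k+1) + q (k+1) - q k))) p ∧
      u (k+1) = (u k + (1/η) • K ((1/γ) • x (k+1) + q (k+1) - q k))
        - (1/(γ*η)) • p)
    (xbar : ℕ → 𝒳)
    (hxbar : ∀ k, xbar k =
      (2 / ((k : ℝ) * ((k : ℝ) + 1))) • ∑ i ∈ Finset.Icc 1 k, (i : ℝ) • x i) :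
    ∃ C : ℝ, 0 ≤ C ∧ ∀ k : ℕ, 1 ≤ k →
      (F (xbar k) + R (xbar k) + H (K (xbar k)))
        - (F xstar + R xstar + H (K xstar)) ≤ C / k := by
  choose p hprox hup using hu
  have hγη : 0 < γ * η := mul_pos hγ0 hη0
  have hKa : ∀ w z, ⟪w, K z⟫ = ⟪(ContinuousLinearMap.adjoint K) w, z⟫ := fun w z =>
    (ContinuousLinearMap.adjoint_inner_left K z w).symm
  set Ka := ContinuousLinearMap.adjoint K with hKadef
  set qs : 𝒳 := (1/γ) • xstar - F' xstar with hqs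
  -- subgradients
  have hr : ∀ k, IsSubgradientAt R (x (k+1)) (q k - Ka (u k) - (1/γ) • x (k+1)) := by
    intro k
    have h := prox_subgradient hγ0 hRconv (hx k)
    have e : (1/γ) • (γ • (q k - Ka (u k)) - x (k+1)) = q k - Ka (u k) - (1/γ) • x (k+1) := by
      rw [smul_sub, smul_smul, one_div_mul_cancel hγ0.ne', one_smul]
    rwa [e] at h
  have hh : ∀ k, IsSubgradientAt H (p k) (u (k+1)) := by
    intro k
    have h := prox_subgradient hγη hHconv (hprox k)
    have e : ∀ v : 𝒰, (1/(γ*η)) • ((γ*η) • v - p k) = v - (1/(γ*η)) • p k := by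
      intro v
      rw [smul_sub, smul_smul, one_div_mul_cancel hγη.ne', one_smul]
    rw [e, ← hup k] at h
    exact h
  have hpk : ∀ k, p k = K (x (k+1)) - (γ*η) • (u (k+1) - u k) + γ • K (q (k+1) - q k) := by
    intro k
    have e : (γ * η) • (1/(γ*η)) • p k = p k := by
      rw [smul_smul, mul_one_div_cancel hγη.ne', one_smul]
    have e2 : (1/(γ*η)) • p k
        = (u k - u (k+1)) + (1/η) • K ((1/γ) • x (k+1) + q (k+1) - q k) := by
      rw [hup k]; abel
    rw [← e, e2]
    simp only [map_sub, map_add, map_smul]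
    match_scalars <;> field_simp
  -- the two basic inequalities
  have hxq : ∀ k, x (k+1) - xstar
      = γ • ((q (k+1) - qs) + (F' (x (k+1)) - F' xstar)) := by
    intro k
    rw [hq k, hqs]
    match_scalars <;> field_simp <;> ring
  have hcore : ∀ (w : 𝒰) k,
      ⟪q k - q (k+1) - Ka (u k - w), x (k+1) - xstar⟫ + ⟪u (k+1) - w, p k - K xstar⟫ ≤
        γ / 2 * lyap K η (q k - qs) (u k - w) - γ / 2 * lyap K η (q (k+1) - qs) (u (k+1) - w)
          + γ / 2 * ‖F' (x (k+1)) - F' xstar‖ ^ 2 := by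
    intro w k
    have h := core K hγ0 hη (q k - qs) (q (k+1) - qs) (x (k+1) - xstar)
      (F' (x (k+1)) - F' xstar) (u k - w) (u (k+1) - w) (p k - K xstar) (hxq k) (by
        rw [hpk k]
        simp only [map_sub]
        module)
    have e : q k - qs - (q (k+1) - qs) = q k - q (k+1) := by abel
    rw [e] at h
    exact h
  have stepA : ∀ k, F (x (k+1)) + R (x (k+1)) + H (p k) - (F xstar + R xstar + H (K xstar)) ≤
      γ / 2 * lyap K η (q k - qs) (u k) - γ / 2 * lyap K η (q (k+1) - qs) (u (k+1))
        + γ / 2 * ‖F' (x (k+1)) - F' xstar‖ ^ 2 := by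
    intro k
    have h := hcore 0 k
    simp only [sub_zero] at h
    have h1 := grad_subgradient hFgrad hFconv (x (k+1)) xstar
    have h2 := hr k xstar
    have h3 := hh k (K xstar)
    rw [← neg_sub (x (k+1)) xstar, inner_neg_right] at h1 h2
    rw [← neg_sub (p k) (K xstar), inner_neg_right] at h3
    have e : q k - q (k+1) - Ka (u k)
        = (q k - Ka (u k) - (1/γ) • x (k+1)) + F' (x (k+1)) := by
      rw [hq k]; abel
    rw [e, inner_add_left] at h
    linarith
  have stepB : ∀ k, γ / 2 * lyap K η (q (k+1) - qs) (u (k+1) - hstar)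
      + (1 / L_F - γ / 2) * ‖F' (x (k+1)) - F' xstar‖ ^ 2
      ≤ γ / 2 * lyap K η (q k - qs) (u k - hstar) := by
    intro k
    have h := hcore hstar k
    have h1 := cocoercive hLF hFgrad hFconv hFlip (x (k+1)) xstar
    have h2 := subgradient_mono (hr k) hrstar
    have h3 := subgradient_mono (hh k) hhstar
    have e : q k - q (k+1) - Ka (u k - hstar)
        = (q k - Ka (u k) - (1/γ) • x (k+1) - rstar) + (F' (x (k+1)) - F' xstar) := by
      have e0 : Ka hstar = - F' xstar - rstar := by
        rw [← sub_eq_zero, ← hopt]; abel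
      rw [hq k, map_sub, e0]; abel
    rw [e, inner_add_left] at h
    linarith
  have hc : 0 < 1 / L_F - γ / 2 := by
    have : 2 / L_F = 2 * (1 / L_F) := by ring
    linarith
  have lyap_nonneg : ∀ a b, 0 ≤ lyap K η a b := by
    intro a b
    have := adj_le K hη b
    unfold lyap
    nlinarith [sq_nonneg ‖a - (ContinuousLinearMap.adjoint K) b‖]
  set V : ℕ → ℝ := fun k => lyap K η (q k - qs) (u k - hstar) with hV
  have hVsum : ∀ k, γ / 2 * V k + (1 / L_F - γ / 2) *
      ∑ j ∈ Finset.range k, ‖F' (x (j+1)) - F' xstar‖ ^ 2 ≤ γ / 2 * V 0 := by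
    intro k
    induction k with
    | zero => simp
    | succ n ih =>
      rw [Finset.sum_range_succ, mul_add]
      have := stepB n
      simp only [hV] at ih ⊢
      linarith
  have hVle : ∀ k, V k ≤ V 0 := by
    intro k
    have h1 := hVsum k
    have h2 : 0 ≤ (1 / L_F - γ / 2) *
      ∑ j ∈ Finset.range k, ‖F' (x (j+1)) - F' xstar‖ ^ 2 :=
      mul_nonneg hc.le (Finset.sum_nonneg fun _ _ => by positivity)
    exact le_of_mul_le_mul_left (by linarith) (by positivity : 0 < γ / 2)
  have hGsum : ∀ k, ∑ j ∈ Finset.range k, γ / 2 * ‖F' (x (j+1)) - F' xstar‖ ^ 2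
      ≤ γ / 2 * ((γ / 2 * V 0) / (1 / L_F - γ / 2)) := by
    intro k
    rw [← Finset.mul_sum]
    gcongr
    rw [le_div_iff₀ hc]
    have h1 := hVsum k
    have h2 : 0 ≤ V k := lyap_nonneg _ _
    nlinarith
  -- boundedness
  have hy : ∀ k, ‖(q k - qs) - Ka (u k - hstar)‖ ≤ √(V 0) := by
    intro k
    apply Real.le_sqrt_of_sq_le
    have h := hVle k
    have h2 := adj_le K hη (u k - hstar)
    simp only [hV, lyap] at h ⊢
    linarith
  set S := √(V 0) with hS
  have hS0 : 0 ≤ S := Real.sqrt_nonneg _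
  have hxb : ∀ k, ‖x (k+1) - xstar‖ ≤ γ * S := by
    intro k
    have h2 := subgradient_mono (hr k) hrstar
    have e : q k - Ka (u k) - (1/γ) • x (k+1) - rstar
        = ((q k - qs) - Ka (u k - hstar)) - (1/γ) • (x (k+1) - xstar) := by
      have e0 : Ka hstar = - F' xstar - rstar := by
        rw [← sub_eq_zero, ← hopt]; abel
      rw [map_sub, e0, hqs, smul_sub]; abel
    rw [e, inner_sub_left, inner_smul_left, real_inner_self_eq_norm_sq] at h2
    have h3 := real_inner_le_norm ((q k - qs) - Ka (u k - hstar)) (x (k+1) - xstar)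
    have h4 := mul_le_mul_of_nonneg_right (hy k) (norm_nonneg (x (k+1) - xstar))
    simp only [conj_trivial] at h2
    have h5 : 1 / γ * ‖x (k+1) - xstar‖ ^ 2 ≤ S * ‖x (k+1) - xstar‖ := by linarith
    rw [one_div, ← div_eq_inv_mul, div_le_iff₀ hγ0] at h5
    by_contra hcon
    push Not at hcon
    have : 0 < ‖x (k+1) - xstar‖ := lt_of_le_of_lt (by positivity) hcon
    nlinarith
  have hqb : ∀ k, ‖q (k+1) - qs‖ ≤ (1/γ + L_F) * (γ * S) := by
    intro k
    have e : q (k+1) - qs = (1/γ) • (x (k+1) - xstar) - (F' (x (k+1)) - F' xstar) := by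
      rw [hq k, hqs, smul_sub]; abel
    rw [e]
    have h1 := norm_sub_le ((1/γ) • (x (k+1) - xstar)) (F' (x (k+1)) - F' xstar)
    rw [norm_smul, Real.norm_eq_abs, abs_of_pos (by positivity : 0 < 1/γ)] at h1
    have h2 := hFlip (x (k+1)) xstar
    have h3 := mul_le_mul_of_nonneg_left (hxb k) (by positivity : 0 ≤ 1/γ + L_F)
    linarith
  obtain ⟨Q, hQ⟩ : ∃ Q, ∀ k, ‖q k - qs‖ ≤ Q := by
    refine ⟨max ‖q 0 - qs‖ ((1/γ + L_F) * (γ * S)), fun k => ?_⟩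
    cases k with
    | zero => exact le_max_left _ _
    | succ n => exact (hqb n).trans (le_max_right _ _)
  have hQ0 : 0 ≤ Q := (norm_nonneg _).trans (hQ 0)
  have hKu : ∀ k, ‖Ka (u k - hstar)‖ ≤ Q + S := by
    intro k
    have e : Ka (u k - hstar) = (q k - qs) - ((q k - qs) - Ka (u k - hstar)) := by abel
    rw [e]
    exact (norm_sub_le _ _).trans (add_le_add (hQ k) (hy k))
  obtain ⟨U, hU⟩ : ∃ U, ∀ k, ‖u k‖ ≤ U := by
    refine ⟨√((V 0 + (Q + S) ^ 2) / η) + ‖hstar‖, fun k => ?_⟩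
    have h1 : ‖u k - hstar‖ ≤ √((V 0 + (Q + S) ^ 2) / η) := by
      apply Real.le_sqrt_of_sq_le
      rw [le_div_iff₀ hη0]
      have h := hVle k
      have h2 : ‖Ka (u k - hstar)‖ ^ 2 ≤ (Q + S) ^ 2 := by
        gcongr; exact hKu k
      simp only [hV, lyap] at h ⊢
      nlinarith [sq_nonneg ‖(q k - qs) - Ka (u k - hstar)‖]
    have h2 := norm_add_le (u k - hstar) hstar
    rw [sub_add_cancel] at h2
    linarith
  have hU0 : 0 ≤ U := (norm_nonneg _).trans (hU 0)
  have hWB : ∀ k, γ / 2 * lyap K η (q k - qs) (u k)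
      ≤ γ / 2 * ((Q + ‖Ka‖ * U) ^ 2 + η * U ^ 2) := by
    intro k
    have h1 : ‖(q k - qs) - Ka (u k)‖ ≤ Q + ‖Ka‖ * U :=
      (norm_sub_le _ _).trans (add_le_add (hQ k) (Ka.le_opNorm_of_le (hU k)))
    have h2 : ‖(q k - qs) - Ka (u k)‖ ^ 2 ≤ (Q + ‖Ka‖ * U) ^ 2 := by gcongr
    have h3 : η * ‖u k‖ ^ 2 ≤ η * U ^ 2 := by
      gcongr; exact hU k
    gcongr
    unfold lyap
    linarith [sq_nonneg ‖Ka (u k)‖]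
  have hab : ∀ k, ‖(γ * η) • u k - γ • K (q k - qs)‖ ≤ γ * η * U + γ * (‖K‖ * Q) := by
    intro k
    refine (norm_sub_le _ _).trans (add_le_add ?_ ?_)
    · rw [norm_smul, Real.norm_eq_abs, abs_of_pos hγη]; gcongr; exact hU k
    · rw [norm_smul, Real.norm_eq_abs, abs_of_pos hγ0]; gcongr; exact K.le_opNorm_of_le (hQ k)
  have hXb : ∀ k, ‖x (k+1)‖ ≤ γ * S + ‖xstar‖ := by
    intro k
    have h2 := norm_add_le (x (k+1) - xstar) xstar
    rw [sub_add_cancel] at h2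
    linarith [hxb k]
  obtain ⟨C, hC0, hC⟩ := averaging K F R H hFconv hRconv hHconv (fun k => x (k+1)) p
    (fun k => (γ * η) • u k - γ • K (q k - qs))
    (fun k => γ / 2 * lyap K η (q k - qs) (u k))
    (fun k => γ / 2 * ‖F' (x (k+1)) - F' xstar‖ ^ 2)
    (F xstar + R xstar + H (K xstar)) _ _ _ _
    (fun k => mul_nonneg (by positivity) (lyap_nonneg _ _)) hWB
    (fun k => by positivity) hGsum stepA
    (fun k => by
      change K (x (k+1)) - p k = _
      rw [hpk k]; simp only [map_sub]; module) hab hXb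
  refine ⟨C, hC0, fun k hk => hC k hk _ ?_⟩
  rw [hxbar k]
  congr 1
  rw [← Finset.Ico_add_one_right_eq_Icc, Finset.sum_Ico_eq_sum_range]
  simp only [Nat.add_sub_cancel]
  refine Finset.sum_congr rfl fun j _ => ?_
  rw [add_comm 1 j]; push_cast; rfl

end

/-- Theorem 1(ii): ergodic `O(1/k)` rate of the PD3O algorithm with constant stepsize. -/
theorem pd3o_ergodic_rate
    {𝒳 𝒰 : Type*}
    [NormedAddCommGroup 𝒳] [InnerProductSpace ℝ 𝒳] [FiniteDimensional ℝ 𝒳]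
    [NormedAddCommGroup 𝒰] [InnerProductSpace ℝ 𝒰] [FiniteDimensional ℝ 𝒰]
    (K : 𝒳 →L[ℝ] 𝒰)
    (F R : 𝒳 → ℝ) (H : 𝒰 → ℝ) (F' : 𝒳 → 𝒳) (L_F : ℝ)
    (hLF : 0 < L_F)
    (hFconv : ConvexOn ℝ Set.univ F)
    (hRconv : ConvexOn ℝ Set.univ R)
    (hHconv : ConvexOn ℝ Set.univ H)
    (hFgrad : ∀ z, HasGradientAt F (F' z) z)
    (hFlip : ∀ z z', ‖F' z - F' z'‖ ≤ L_F * ‖z - z'‖)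
    -- Assumption 1: existence of a primal-dual solution
    (xstar : 𝒳) (rstar : 𝒳) (hstar : 𝒰)
    (hrstar : IsSubgradientAt R xstar rstar)
    (hhstar : IsSubgradientAt H (K xstar) hstar)
    (hopt : F' xstar + rstar + (ContinuousLinearMap.adjoint K) hstar = 0)
    -- parameters
    (γ η : ℝ) (hγ0 : 0 < γ) (hγ2 : γ < 2 / L_F) (hη : ‖K‖ ^ 2 ≤ η)
    -- PD3O iterates
    (x q : ℕ → 𝒳) (u : ℕ → 𝒰)
    (hx : ∀ k, IsProxPt γ R
      (γ • (q k - (ContinuousLinearMap.adjoint K) (u k))) (x (k+1)))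
    (hq : ∀ k, q (k+1) = (1/γ) • x (k+1) - F' (x (k+1)))
    (hu : ∀ k, ∃ p, IsProxPt (γ*η) H
        ((γ*η) • (u k + (1/η) • K ((1/γ) • x (k+1) + q (k+1) - q k))) p ∧
      u (k+1) = (u k + (1/η) • K ((1/γ) • x (k+1) + q (k+1) - q k))
        - (1/(γ*η)) • p)
    -- the weighted ergodic iterate
    (xbar : ℕ → 𝒳)
    (hxbar : ∀ k, xbar k =
      (2 / ((k : ℝ) * ((k : ℝ) + 1))) • ∑ i ∈ Finset.Icc 1 k, (i : ℝ) • x i) :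
    ∃ C : ℝ, 0 ≤ C ∧ ∀ k : ℕ, 1 ≤ k →
      (F (xbar k) + R (xbar k) + H (K (xbar k)))
        - (F xstar + R xstar + H (K xstar)) ≤ C / k := by
  rcases (sq_nonneg ‖K‖).trans hη |>.eq_or_lt with h0 | hpos
  · have hK : K = 0 := by
      have : ‖K‖ ^ 2 = 0 := le_antisymm (h0 ▸ hη) (sq_nonneg _)
      exact norm_eq_zero.1 (pow_eq_zero_iff (two_ne_zero) |>.1 this)
    subst hK
    have h := main_pos (0 : 𝒳 →L[ℝ] 𝒰) F R (fun _ => H 0) F' L_F hLF hFconv hRconv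
      (convexOn_const _ convex_univ) hFgrad hFlip xstar rstar 0 hrstar
      (fun y => by simp) (by simpa using hopt) γ 1 hγ0 hγ2 one_pos (by simp) x q (fun _ => 0)
      (fun k => by simpa using hx k) hq
      (fun k => ⟨0, fun y => by simp; positivity, by simp⟩) xbar hxbar
    simpa using h
  · exact main_pos K F R H F' L_F hLF hFconv hRconv hHconv hFgrad hFlip xstar rstar hstar hrstar
      hhstar hopt γ η hγ0 hγ2 hpos hη x q u hx hq hu xbar hxbar
end
end

section
/- Theorem 5, first part (linear convergence of the PD3O algorithm): Suppose F is μ_F-strongly convex and R is μ_R-strongly convex with μ_F + μ_R > 0, and H is differentiable with L_H-Lipschitz gradient for some L_H > 0. Let x* be the unique minimizer of Ψ and let u* = ∇H(Kx*) be the unique dual solution. Suppose γ_k ≡ γ ∈ (0, 2/L_F) and η ≥ ‖K‖². Then the PD3O algorithm converges linearly: there exists ρ ∈ (0,1] such that for every k ≥ 0, ‖x^{k+1} − x*‖² ≤ (1−ρ)^k · (‖γq⁰ − x* + γ∇F(x*) − γK*(u⁰ − u*)‖² + γ²η‖u⁰ − u*‖² − γ²‖K*(u⁰ − u*)‖²).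 -/
open Filter Topology RealInnerProductSpace

noncomputable section

theorem aux_lim {a b c : ℝ} (h : ∀ t : ℝ, 0 < t → t < 1 → a ≤ b + t * c) : a ≤ b := by
  have h1 : Tendsto (fun t : ℝ => b + t * c) (𝓝[>] 0) (𝓝 b) := by
    have : Tendsto (fun t : ℝ => b + t * c) (𝓝 0) (𝓝 (b + 0 * c)) :=
      (continuous_const.add (continuous_id.mul continuous_const)).tendsto 0
    rw [zero_mul, add_zero] at this
    exact this.mono_left nhdsWithin_le_nhds
  refine ge_of_tendsto h1 ?_
  filter_upwards [Ioo_mem_nhdsGT (zero_lt_one (α := ℝ))] with t ht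
  exact h t ht.1 ht.2

section aux
variable {E : Type*} [NormedAddCommGroup E] [InnerProductSpace ℝ E]

theorem aux_conv {G : E → ℝ} (hG : ConvexOn ℝ Set.univ G) (x y : E) {t : ℝ} (h0 : 0 < t)
    (h1 : t < 1) : G (x + t • (y - x)) ≤ (1 - t) * G x + t * G y := by
  have := hG.2 (Set.mem_univ x) (Set.mem_univ y) (by linarith : 0 ≤ 1 - t) h0.le
    (by ring)
  simp only [smul_eq_mul] at this
  have e : (1 - t) • x + t • y = x + t • (y - x) := by module
  rwa [e] at this

theorem aux_nsq (x d : E) (t : ℝ) : ‖x + t • d‖ ^ 2 = ‖x‖ ^ 2 + 2 * t * ⟪x, d⟫ + t ^ 2 * ‖d‖ ^ 2 := by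
  rw [norm_add_sq_real, real_inner_smul_right, norm_smul, mul_pow, Real.norm_eq_abs, sq_abs]
  ring

theorem aux_strong {G : E → ℝ} {μ : ℝ}
    (hG : ConvexOn ℝ Set.univ fun z => G z - μ / 2 * ‖z‖ ^ 2) {x r : E}
    (hr : IsSubgradientAt G x r) (y : E) :
    G x + ⟪r, y - x⟫ + μ / 2 * ‖y - x‖ ^ 2 ≤ G y := by
  apply aux_lim (c := μ / 2 * ‖y - x‖ ^ 2)
  intro t h0 h1
  have h2 := aux_conv hG x y h0 h1
  have h3 := hr (x + t • (y - x))
  have e : y = x + (1:ℝ) • (y - x) := by module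
  have h4 : ‖y‖ ^ 2 = ‖x‖ ^ 2 + 2 * 1 * ⟪x, y - x⟫ + 1 ^ 2 * ‖y - x‖ ^ 2 := by
    conv_lhs => rw [e]
    exact aux_nsq x (y - x) 1
  simp only [aux_nsq, h4] at h2
  rw [add_sub_cancel_left, real_inner_smul_right] at h3
  refine le_of_mul_le_mul_left ?_ h0
  linarith

theorem aux_prox {G : E → ℝ} (hG : ConvexOn ℝ Set.univ G) {σ : ℝ} (hσ : 0 < σ) {z p : E}
    (h : IsProxPt σ G z p) : IsSubgradientAt G p ((1 / σ) • (z - p)) := by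
  intro y
  apply aux_lim (c := ‖y - p‖ ^ 2 / 2 / σ)
  intro t h0 h1
  have h2 := aux_conv hG p y h0 h1
  have h3 := h (p + t • (y - p))
  have e : p + t • (y - p) - z = (p - z) + t • (y - p) := by module
  rw [e, aux_nsq] at h3
  have e2 : ⟪p - z, y - p⟫ = - ⟪z - p, y - p⟫ := by
    rw [← neg_sub z p, inner_neg_left]
  rw [e2] at h3
  rw [real_inner_smul_left]
  have h4 := mul_le_mul_of_nonneg_left h2 hσ.le
  have h5 : 0 < t * σ := by positivity
  refine le_of_mul_le_mul_left ?_ h5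
  have e3 : t * σ * (G p + 1 / σ * ⟪z - p, y - p⟫) = t * σ * G p + t * ⟪z - p, y - p⟫ := by
    field_simp
  have e4 : t * σ * (G y + t * (‖y - p‖ ^ 2 / 2 / σ)) = t * σ * G y + t ^ 2 * ‖y - p‖ ^ 2 / 2 := by
    field_simp
  rw [e3, e4]
  linarith

theorem aux_mono {G : E → ℝ} {μ : ℝ}
    (hG : ConvexOn ℝ Set.univ fun z => G z - μ / 2 * ‖z‖ ^ 2) {x r y s : E}
    (hr : IsSubgradientAt G x r) (hs : IsSubgradientAt G y s) :
    μ * ‖x - y‖ ^ 2 ≤ ⟪x - y, r - s⟫ := by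
  have h1 := aux_strong hG hr y
  have h2 := aux_strong hG hs x
  have e : y - x = -(x - y) := by abel
  rw [e, inner_neg_right, norm_neg] at h1
  rw [real_inner_comm, inner_sub_left]
  linarith

variable [CompleteSpace E]

theorem aux_line {G : E → ℝ} {G' : E → E} (hg : ∀ z, HasGradientAt G (G' z) z) (x d : E) (t : ℝ) :
    HasDerivAt (fun t : ℝ => G (x + t • d)) ⟪G' (x + t • d), d⟫ t := by
  have h1 : HasDerivAt (fun t : ℝ => x + t • d) d t := by
    simpa using ((hasDerivAt_id t).smul_const d).const_add x
  have h2 := (hg (x + t • d)).hasFDerivAt.comp_hasDerivAt t h1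
  simp only [InnerProductSpace.toDual_apply_apply] at h2
  exact h2

theorem aux_grad {G : E → ℝ} {G' : E → E} (hg : ∀ z, HasGradientAt G (G' z) z)
    (hG : ConvexOn ℝ Set.univ G) (x : E) : IsSubgradientAt G x (G' x) := by
  intro y
  have hc : ConvexOn ℝ Set.univ (fun t : ℝ => G (x + t • (y - x))) := by
    refine ⟨convex_univ, ?_⟩
    intro s _ t _ a b ha hb hab
    have := hG.2 (Set.mem_univ (x + s • (y - x))) (Set.mem_univ (x + t • (y - x))) ha hb hab
    refine le_trans (le_of_eq ?_) this
    dsimp only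
    congr 1
    have hb' : b = 1 - a := by linarith
    subst hb'
    simp only [smul_eq_mul]
    module
  have h0 := aux_line hg x (y - x) 0
  have := hc.le_slope_of_hasDerivAt (Set.mem_univ 0) (Set.mem_univ 1) zero_lt_one h0
  simp [slope_def_field] at this
  linarith

theorem aux_sub_eq {G : E → ℝ} {g p u : E} (hg : HasGradientAt G g p)
    (hu : IsSubgradientAt G p u) : u = g := by
  have h1 : HasFDerivAt (fun y => G y - ⟪u, y⟫) (InnerProductSpace.toDual ℝ E g - innerSL ℝ u) p :=
    hg.hasFDerivAt.sub (innerSL ℝ u).hasFDerivAt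
  have h2 : IsLocalMin (fun y => G y - ⟪u, y⟫) p := by
    refine Filter.Eventually.of_forall fun y => ?_
    have := hu y
    rw [inner_sub_right] at this
    dsimp only
    linarith
  have h3 := h2.hasFDerivAt_eq_zero h1
  have h4 : ∀ v, ⟪g - u, v⟫ = (0:ℝ) := fun v => by
    have := congrArg (fun T => T v) h3
    simpa [inner_sub_left] using this
  have := h4 (g - u)
  rw [inner_self_eq_zero, sub_eq_zero] at this
  exact this.symm

theorem aux_descent {G : E → ℝ} {G' : E → E} (hg : ∀ z, HasGradientAt G (G' z) z) {L : ℝ}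
    (hL : ∀ z z', ‖G' z - G' z'‖ ≤ L * ‖z - z'‖) (x y : E) :
    G y ≤ G x + ⟪G' x, y - x⟫ + L / 2 * ‖y - x‖ ^ 2 := by
  set d := y - x with hd
  have hder : ∀ t : ℝ, HasDerivAt (fun t : ℝ => G (x + t • d) - t * ⟪G' x, d⟫
      - L / 2 * t ^ 2 * ‖d‖ ^ 2) (⟪G' (x + t • d), d⟫ - ⟪G' x, d⟫ - L * t * ‖d‖ ^ 2) t := by
    intro t
    have h1 := aux_line hg x d t
    have h2 := (hasDerivAt_id t).mul_const (⟪G' x, d⟫ : ℝ)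
    have h3 := (((hasDerivAt_id t).pow 2).const_mul (L / 2)).mul_const (‖d‖ ^ 2)
    have := (h1.sub h2).sub h3
    refine this.congr_deriv ?_
    norm_num
    left
    ring
  have han : AntitoneOn (fun t : ℝ => G (x + t • d) - t * ⟪G' x, d⟫
      - L / 2 * t ^ 2 * ‖d‖ ^ 2) (Set.Icc 0 1) := by
    apply antitoneOn_of_deriv_nonpos (convex_Icc 0 1)
    · exact fun t _ => (hder t).continuousAt.continuousWithinAt
    · exact fun t _ => (hder t).differentiableAt.differentiableWithinAt
    · intro t ht
      rw [interior_Icc] at ht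
      rw [(hder t).deriv, ← inner_sub_left]
      have h1 := real_inner_le_norm (G' (x + t • d) - G' x) d
      have h2 := hL (x + t • d) x
      rw [add_sub_cancel_left, norm_smul, Real.norm_eq_abs, abs_of_pos ht.1] at h2
      have h3 := mul_le_mul_of_nonneg_right h2 (norm_nonneg d)
      nlinarith
  have := han (Set.left_mem_Icc.2 zero_le_one) (Set.right_mem_Icc.2 zero_le_one) zero_le_one
  simp at this
  have e : x + d = y := by rw [hd]; abel
  rw [e] at this
  linarith

theorem aux_coco_half {G : E → ℝ} {G' : E → E} (hg : ∀ z, HasGradientAt G (G' z) z)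
    (hG : ConvexOn ℝ Set.univ G) {L : ℝ} (hL0 : 0 < L)
    (hL : ∀ z z', ‖G' z - G' z'‖ ≤ L * ‖z - z'‖) (x y : E) :
    G x + ⟪G' x, y - x⟫ + 1 / (2 * L) * ‖G' x - G' y‖ ^ 2 ≤ G y := by
  have h1 := aux_grad hg hG x (y + (1 / L) • (G' x - G' y))
  have h2 := aux_descent hg hL y (y + (1 / L) • (G' x - G' y))
  have e1 : y + (1 / L) • (G' x - G' y) - x = (y - x) + (1 / L) • (G' x - G' y) := by abel
  rw [e1, inner_add_right, real_inner_smul_right] at h1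
  rw [add_sub_cancel_left, real_inner_smul_right, norm_smul, mul_pow, Real.norm_eq_abs, sq_abs] at h2
  have e2 : ⟪G' x, G' x - G' y⟫ - ⟪G' y, G' x - G' y⟫ = ‖G' x - G' y‖ ^ 2 := by
    rw [← inner_sub_left, real_inner_self_eq_norm_sq]
  have e3 : L / 2 * ((1 / L) ^ 2 * ‖G' x - G' y‖ ^ 2) = 1 / (2 * L) * ‖G' x - G' y‖ ^ 2 := by
    field_simp
  have e4 : 1 / L * ‖G' x - G' y‖ ^ 2 = 2 * (1 / (2 * L) * ‖G' x - G' y‖ ^ 2) := by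
    field_simp
  have e5 := congrArg (fun s => 1 / L * s) e2
  simp only [mul_sub] at e5
  linarith

theorem aux_coco {G : E → ℝ} {G' : E → E} (hg : ∀ z, HasGradientAt G (G' z) z)
    (hG : ConvexOn ℝ Set.univ G) {L : ℝ} (hL0 : 0 < L)
    (hL : ∀ z z', ‖G' z - G' z'‖ ≤ L * ‖z - z'‖) (x y : E) :
    ‖G' x - G' y‖ ^ 2 ≤ L * ⟪x - y, G' x - G' y⟫ := by
  have h1 := aux_coco_half hg hG hL0 hL x y
  have h2 := aux_coco_half hg hG hL0 hL y x
  have e : y - x = -(x - y) := by abel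
  rw [e, inner_neg_right] at h1
  rw [norm_sub_rev] at h2
  rw [real_inner_comm, inner_sub_left]
  have e4 : ‖G' x - G' y‖ ^ 2 = L * (2 * (1 / (2 * L) * ‖G' x - G' y‖ ^ 2)) := by
    field_simp
  rw [e4]
  refine mul_le_mul_of_nonneg_left ?_ hL0.le
  linarith

end aux

theorem aux_step {X U : Type*} [NormedAddCommGroup X] [InnerProductSpace ℝ X]
    [NormedAddCommGroup U] [InnerProductSpace ℝ U]
    {γ η L LH μF μR c : ℝ} (hγ : 0 < γ) (hη : 0 ≤ η) (hL : 0 < L) (hγL : γ * L < 2) (hc : 0 ≤ c)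
    (hLH : 0 < LH)
    (hc1 : c * (2 * (1 + γ * L) ^ 2) ≤ (2 - γ * L) * γ * μF + 2 * γ * μR)
    (hc2 : c * (2 * γ ^ 2 * η + 1) ≤ 2 * γ / LH)
    {dx df dr a a' : X} {du du' : U} {w : ℝ}
    (hw : w = ⟪dx - γ • df - γ • dr - γ • a, a'⟫ - γ * η * ⟪du' - du, du'⟫)
    (hwn : ‖du'‖ ^ 2 ≤ LH * w)
    (hM : ‖a' - a‖ ^ 2 ≤ η * ‖du' - du‖ ^ 2)
    (hM' : ‖a'‖ ^ 2 ≤ η * ‖du'‖ ^ 2)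
    (hdf : ‖df‖ ≤ L * ‖dx‖) (hco : ‖df‖ ^ 2 ≤ L * ⟪dx, df⟫)
    (hF : μF * ‖dx‖ ^ 2 ≤ ⟪dx, df⟫) (hR : μR * ‖dx‖ ^ 2 ≤ ⟪dx, dr⟫) :
    (1 + c) * (‖dx - γ • df - γ • a'‖ ^ 2 + γ ^ 2 * η * ‖du'‖ ^ 2 - γ ^ 2 * ‖a'‖ ^ 2) ≤
      ‖dx + γ • dr‖ ^ 2 + γ ^ 2 * η * ‖du‖ ^ 2 - γ ^ 2 * ‖a‖ ^ 2 := by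
  set V' := ‖dx - γ • df - γ • a'‖ ^ 2 + γ ^ 2 * η * ‖du'‖ ^ 2 - γ ^ 2 * ‖a'‖ ^ 2 with hV'
  have hid : ‖dx + γ • dr‖ ^ 2 + γ ^ 2 * η * ‖du‖ ^ 2 - γ ^ 2 * ‖a‖ ^ 2 - V' =
      2 * γ * ⟪dx, df⟫ - γ ^ 2 * ‖df‖ ^ 2 + 2 * γ * ⟪dx, dr⟫ + 2 * γ * w
      + γ ^ 2 * ‖dr + a'‖ ^ 2 + γ ^ 2 * (η * ‖du' - du‖ ^ 2 - ‖a' - a‖ ^ 2) := by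
    rw [hV', hw]
    simp only [← real_inner_self_eq_norm_sq, inner_add_left, inner_add_right, inner_sub_left,
      inner_sub_right, real_inner_smul_left, real_inner_smul_right]
    rw [real_inner_comm dx df, real_inner_comm dx dr, real_inner_comm dx a',
      real_inner_comm df a', real_inner_comm dr a', real_inner_comm a a',
      real_inner_comm du du']
    ring
  have h1 : (2 - γ * L) * γ * (μF * ‖dx‖ ^ 2) ≤ 2 * γ * ⟪dx, df⟫ - γ ^ 2 * ‖df‖ ^ 2 := by
    have i1 := mul_le_mul_of_nonneg_left hF (by nlinarith : 0 ≤ (2 - γ * L) * γ)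
    have i2 := mul_le_mul_of_nonneg_left hco (by positivity : 0 ≤ γ ^ 2)
    linarith
  have h2 := mul_le_mul_of_nonneg_left hR (by positivity : 0 ≤ 2 * γ)
  have h3 : 2 * γ / LH * ‖du'‖ ^ 2 ≤ 2 * γ * w := by
    have i1 := mul_le_mul_of_nonneg_left hwn (by positivity : 0 ≤ 2 * γ / LH)
    have i2 : 2 * γ / LH * (LH * w) = 2 * γ * w := by field_simp
    linarith
  have h4 : 0 ≤ γ ^ 2 * ‖dr + a'‖ ^ 2 := by positivity
  have h5 : 0 ≤ γ ^ 2 * (η * ‖du' - du‖ ^ 2 - ‖a' - a‖ ^ 2) :=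
    mul_nonneg (by positivity) (by linarith)
  have h6 : V' ≤ 2 * (1 + γ * L) ^ 2 * ‖dx‖ ^ 2 + (2 * γ ^ 2 * η + 1) * ‖du'‖ ^ 2 := by
    have i1 : ‖dx - γ • df‖ ≤ (1 + γ * L) * ‖dx‖ := by
      have := norm_sub_le dx (γ • df)
      rw [norm_smul, Real.norm_eq_abs, abs_of_pos hγ] at this
      have j := mul_le_mul_of_nonneg_left hdf hγ.le
      linarith
    have i2 : ‖dx - γ • df‖ ^ 2 ≤ ((1 + γ * L) * ‖dx‖) ^ 2 := by gcongr
    have i3 := parallelogram_law_with_norm ℝ (dx - γ • df) (γ • a')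
    have i4 : ‖γ • a'‖ ^ 2 = γ ^ 2 * ‖a'‖ ^ 2 := by
      rw [norm_smul, mul_pow, Real.norm_eq_abs, sq_abs]
    have i5 := sq_nonneg ‖dx - γ • df + γ • a'‖
    have i6 := mul_le_mul_of_nonneg_left hM' (by positivity : 0 ≤ γ ^ 2)
    have i7 := sq_nonneg ‖du'‖
    rw [hV']
    linarith
  have h7 := mul_le_mul_of_nonneg_left h6 hc
  have h8 := mul_le_mul_of_nonneg_right hc1 (sq_nonneg ‖dx‖)
  have h9 := mul_le_mul_of_nonneg_right hc2 (sq_nonneg ‖du'‖)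
  nlinarith

/-- Theorem 5, first part: linear convergence of the PD3O algorithm when
`μ_F + μ_R > 0` and `H` is `L_H`-smooth. -/
theorem pd3o_linear_convergence
    {𝒳 𝒰 : Type*}
    [NormedAddCommGroup 𝒳] [InnerProductSpace ℝ 𝒳] [FiniteDimensional ℝ 𝒳]
    [NormedAddCommGroup 𝒰] [InnerProductSpace ℝ 𝒰] [FiniteDimensional ℝ 𝒰]
    (K : 𝒳 →L[ℝ] 𝒰)
    (F R : 𝒳 → ℝ) (H : 𝒰 → ℝ) (F' : 𝒳 → 𝒳) (L_F : ℝ)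
    (hLF : 0 < L_F)
    (hFconv : ConvexOn ℝ Set.univ F)
    (hRconv : ConvexOn ℝ Set.univ R)
    (hHconv : ConvexOn ℝ Set.univ H)
    (hFgrad : ∀ z, HasGradientAt F (F' z) z)
    (hFlip : ∀ z z', ‖F' z - F' z'‖ ≤ L_F * ‖z - z'‖)
    -- strong convexity
    (μF μR : ℝ) (hμF : 0 ≤ μF) (hμR : 0 ≤ μR) (hμ : 0 < μF + μR)
    (hFsc : ConvexOn ℝ Set.univ fun z => F z - μF / 2 * ‖z‖ ^ 2)
    (hRsc : ConvexOn ℝ Set.univ fun z => R z - μR / 2 * ‖z‖ ^ 2)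
    -- H is L_H-smooth
    (H' : 𝒰 → 𝒰) (L_H : ℝ) (hLH : 0 < L_H)
    (hHgrad : ∀ v, HasGradientAt H (H' v) v)
    (hHlip : ∀ v v', ‖H' v - H' v'‖ ≤ L_H * ‖v - v'‖)
    -- x* is the (unique) minimizer of Ψ, and Assumption 1 holds
    (xstar : 𝒳)
    (hxstar : ∀ y, F xstar + R xstar + H (K xstar) ≤ F y + R y + H (K y))
    (rstar : 𝒳)
    (hrstar : IsSubgradientAt R xstar rstar)
    (hopt : F' xstar + rstar
      + (ContinuousLinearMap.adjoint K) (H' (K xstar)) = 0)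
    -- u* is the (unique) dual solution
    (ustar : 𝒰) (hustar : ustar = H' (K xstar))
    -- parameters
    (γ η : ℝ) (hγ0 : 0 < γ) (hγ2 : γ < 2 / L_F) (hη : ‖K‖ ^ 2 ≤ η)
    -- PD3O iterates
    (x q : ℕ → 𝒳) (u : ℕ → 𝒰)
    (hx : ∀ k, IsProxPt γ R
      (γ • (q k - (ContinuousLinearMap.adjoint K) (u k))) (x (k+1)))
    (hq : ∀ k, q (k+1) = (1/γ) • x (k+1) - F' (x (k+1)))
    (hu : ∀ k, ∃ p, IsProxPt (γ*η) H
        ((γ*η) • (u k + (1/η) • K ((1/γ) • x (k+1) + q (k+1) - q k))) p ∧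
      u (k+1) = (u k + (1/η) • K ((1/γ) • x (k+1) + q (k+1) - q k))
        - (1/(γ*η)) • p) :
    ∃ ρ : ℝ, 0 < ρ ∧ ρ ≤ 1 ∧ ∀ k : ℕ,
      ‖x (k+1) - xstar‖^2 ≤ (1 - ρ)^k *
        (‖γ • q 0 - xstar + γ • F' xstar
            - γ • (ContinuousLinearMap.adjoint K) (u 0 - ustar)‖^2
          + γ^2 * η * ‖u 0 - ustar‖^2
          - γ^2 * ‖(ContinuousLinearMap.adjoint K) (u 0 - ustar)‖^2) := by
  subst hustar
  set A := ContinuousLinearMap.adjoint K with hAdef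
  set us := H' (K xstar) with hus
  have hη0 : 0 ≤ η := le_trans (sq_nonneg _) hη
  have hA : ∀ v, ‖A v‖ ^ 2 ≤ η * ‖v‖ ^ 2 := by
    intro v
    have h1 : ‖A v‖ ≤ ‖K‖ * ‖v‖ := by
      have := A.le_opNorm v
      rwa [hAdef, LinearIsometryEquiv.norm_map] at this
    calc ‖A v‖ ^ 2 ≤ (‖K‖ * ‖v‖) ^ 2 := by gcongr
      _ = ‖K‖ ^ 2 * ‖v‖ ^ 2 := by ring
      _ ≤ η * ‖v‖ ^ 2 := by gcongr
  have hγL : γ * L_F < 2 := by rwa [lt_div_iff₀ hLF] at hγ2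
  have hrs : rstar = -F' xstar - A us := by
    have := eq_neg_of_add_eq_zero_right (by rw [← hopt]; abel : (F' xstar + A us) + rstar = 0)
    rw [this]; abel
  have hrk : ∀ k, IsSubgradientAt R (x (k+1))
      ((1 / γ) • (γ • (q k - A (u k)) - x (k+1))) := fun k => aux_prox hRconv hγ0 (hx k)
  obtain ⟨r, hr⟩ : ∃ r : ℕ → 𝒳, ∀ k, r k = (1 / γ) • (γ • (q k - A (u k)) - x (k+1)) :=
    ⟨_, fun _ => rfl⟩
  have hγr : ∀ k, γ • r k = γ • q k - γ • A (u k) - x (k+1) := fun k => by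
    rw [hr, smul_smul, mul_one_div_cancel hγ0.ne', one_smul, smul_sub]
  have hγq : ∀ k, γ • q (k+1) = x (k+1) - γ • F' (x (k+1)) := fun k => by
    rw [hq, smul_sub, smul_smul, mul_one_div_cancel hγ0.ne', one_smul]
  simp only [← hr] at hrk
  obtain ⟨V, hV⟩ : ∃ V : ℕ → ℝ, ∀ k, V k = ‖γ • q k - xstar + γ • F' xstar
            - γ • A (u k - us)‖^2 + γ^2 * η * ‖u k - us‖^2 - γ^2 * ‖A (u k - us)‖^2 :=
    ⟨_, fun _ => rfl⟩
  rw [← hV]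
  have hs : ∀ k, γ • q k - xstar + γ • F' xstar - γ • A (u k - us)
      = (x (k+1) - xstar) + γ • (r k - rstar) := fun k => by
    rw [smul_sub, hγr, hrs, map_sub]
    module
  have hs' : ∀ k, γ • q (k+1) - xstar + γ • F' xstar - γ • A (u (k+1) - us)
      = (x (k+1) - xstar) - γ • (F' (x (k+1)) - F' xstar) - γ • A (u (k+1) - us) := fun k => by
    rw [hγq]
    module
  have hRm : ∀ k, μR * ‖x (k+1) - xstar‖ ^ 2 ≤ ⟪x (k+1) - xstar, r k - rstar⟫ := fun k =>
    aux_mono hRsc (hrk k) hrstar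
  have hFm : ∀ k, μF * ‖x (k+1) - xstar‖ ^ 2 ≤ ⟪x (k+1) - xstar, F' (x (k+1)) - F' xstar⟫ :=
    fun k => aux_mono hFsc (aux_grad hFgrad hFconv _) (aux_grad hFgrad hFconv _)
  have hxV : ∀ k, ‖x (k+1) - xstar‖ ^ 2 ≤ V k := by
    intro k
    rw [hV, hs, aux_nsq]
    have h1 := mul_le_mul_of_nonneg_left (hA (u k - us)) (sq_nonneg γ)
    have h2 : 0 ≤ ⟪x (k+1) - xstar, r k - rstar⟫ := le_trans (by positivity) (hRm k)
    have h3 : 0 ≤ 2 * γ * ⟪x (k+1) - xstar, r k - rstar⟫ := by positivity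
    have h4 : 0 ≤ γ ^ 2 * ‖r k - rstar‖ ^ 2 := by positivity
    linarith
  have hc1p : 0 < (2 - γ * L_F) * γ * μF + 2 * γ * μR := by
    have h1 : 0 < (2 - γ * L_F) * γ := mul_pos (by linarith) hγ0
    rcases hμF.lt_or_eq with h | h
    · have := mul_pos h1 h
      positivity
    · have : 0 < μR := by linarith
      rw [← h]
      have : 0 < 2 * γ * μR := by positivity
      linarith
  obtain ⟨c, hc0, hc1, hc2⟩ : ∃ c : ℝ, 0 < c ∧
      c * (2 * (1 + γ * L_F) ^ 2) ≤ (2 - γ * L_F) * γ * μF + 2 * γ * μR ∧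
      c * (2 * γ ^ 2 * η + 1) ≤ 2 * γ / L_H := by
    refine ⟨min (((2 - γ * L_F) * γ * μF + 2 * γ * μR) / (2 * (1 + γ * L_F) ^ 2))
      (2 * γ / L_H / (2 * γ ^ 2 * η + 1)), lt_min (by positivity) (by positivity), ?_, ?_⟩
    · rw [← le_div_iff₀ (by positivity)]
      exact min_le_left _ _
    · rw [← le_div_iff₀ (by positivity)]
      exact min_le_right _ _
  have hstep : ∀ k, (1 + c) * V (k+1) ≤ V k := by
    intro k
    rw [hV, hV, hs', hs k]
    have hdf := hFlip (x (k+1)) xstar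
    have hco := aux_coco hFgrad hFconv hLF hFlip (x (k+1)) xstar
    rcases hη0.lt_or_eq with hηp | hηz
    · obtain ⟨p, hp, hup⟩ := hu k
      have hγη : 0 < γ * η := mul_pos hγ0 hηp
      have hsub := aux_prox hHconv hγη hp
      have hup2 : u (k+1) = H' p := by
        rw [← aux_sub_eq (hHgrad p) hsub, hup, smul_sub, smul_smul,
          one_div_mul_cancel hγη.ne', one_smul]
      have hpe : p = K (x (k+1) + γ • q (k+1) - γ • q k) - (γ * η) • (u (k+1) - u k) := by
        have e1 : (γ * η) • u (k+1) = (γ * η) • u k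
            + K (x (k+1) + γ • q (k+1) - γ • q k) - p := by
          rw [hup, smul_sub, smul_smul, mul_one_div_cancel hγη.ne', one_smul, smul_add, smul_smul]
          have : γ * η * (1 / η) = γ := by field_simp
          rw [this, ← map_smul, smul_sub, smul_add, smul_smul, mul_one_div_cancel hγ0.ne', one_smul]
        rw [smul_sub, e1]
        abel
      have hdp : p - K xstar = K ((x (k+1) - xstar) - γ • (F' (x (k+1)) - F' xstar)
          - γ • (r k - rstar) - γ • A (u k - us)) - (γ * η) • ((u (k+1) - us) - (u k - us)) := by
        have e1 : (x (k+1) - xstar) - γ • (F' (x (k+1)) - F' xstar)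
          - γ • (r k - rstar) - γ • A (u k - us) =
            (x (k+1) + γ • q (k+1) - γ • q k) - xstar := by
          rw [smul_sub γ (r k), hγr, hrs, hγq, map_sub]
          module
        rw [e1, map_sub, sub_sub_sub_cancel_right, hpe]
        abel
      refine aux_step hγ0 hη0 hLF hγL hc0.le hLH hc1 hc2
        (w := ⟪p - K xstar, u (k+1) - us⟫) ?_ ?_ ?_ (hA _) hdf hco (hFm k) (hRm k)
      · rw [hdp, inner_sub_left, real_inner_smul_left, hAdef,
          ContinuousLinearMap.adjoint_inner_right]
      · rw [hup2]
        exact aux_coco hHgrad hHconv hLH hHlip p (K xstar)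
      · rw [← map_sub]
        exact hA _
    · have hA0 : ∀ v, A v = 0 := by
        intro v
        have := hA v
        rw [← hηz, zero_mul] at this
        exact norm_eq_zero.1 (pow_eq_zero_iff two_ne_zero |>.1 (le_antisymm this (sq_nonneg _)))
      have := aux_step (U := 𝒰) hγ0 hη0 hLF hγL hc0.le hLH hc1 hc2
        (dx := x (k+1) - xstar) (df := F' (x (k+1)) - F' xstar) (dr := r k - rstar)
        (a := 0) (a' := 0) (du := 0) (du' := 0) (w := 0)
        (by simp) (by simp) (by simp) (by simp) hdf hco (hFm k) (hRm k)
      simpa [hA0, ← hηz] using this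
  have h1c : 0 < 1 + c := by linarith
  refine ⟨c / (1 + c), by positivity, by rw [div_le_one h1c]; linarith, fun k => ?_⟩
  have e : 1 - c / (1 + c) = (1 + c)⁻¹ := by field_simp; ring
  rw [e]
  refine (hxV k).trans ?_
  induction k with
  | zero => simp
  | succ k ih =>
    rw [pow_succ', mul_assoc, inv_mul_eq_div, le_div_iff₀ h1c, mul_comm]
    exact (hstep k).trans ih
end
end

section
/- Theorem 5, second part (linear convergence of the PDDY algorithm): Suppose F is μ_F-strongly convex and R is μ_R-strongly convex with μ_F + μ_R > 0, and H is differentiable with L_H-Lipschitz gradient for some L_H > 0. Let x* be the unique minimizer of Ψ and let u* = ∇H(Kx*) be the unique dual solution. Suppose γ_k ≡ γ ∈ (0, 2/L_F) and η ≥ ‖K‖². Then the PDDY algorithm converges linearly: there exists ρ ∈ (0,1] such that for every k ≥ 0, ‖x_R^{k+1} − x*‖² ≤ 4(1−ρ)^k · (‖x_R⁰ − x* + γK*(u⁰ − u*)‖² + γ²η‖u⁰ − u*‖² − γ²‖K*(u⁰ − u*)‖²). -/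
open Filter Topology RealInnerProductSpace

noncomputable section

/-- A convenient limit principle. -/
lemma aux_lim_s8 (A B C : ℝ) (h : ∀ t : ℝ, 0 < t → t < 1 → A ≤ B + t * C) : A ≤ B := by
  by_contra hlt
  push Not at hlt
  have hC : 0 ≤ |C| := abs_nonneg C
  have hpos : 0 < 2 * (|C| + (A - B) + 1) := by linarith
  have ht := h ((A - B) / (2 * (|C| + (A - B) + 1))) (div_pos (by linarith) hpos)
    (by rw [div_lt_one hpos]; linarith)
  have h1 : (A - B) / (2 * (|C| + (A - B) + 1)) * C ≤ (A - B) / 2 := by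
    rw [div_mul_eq_mul_div, div_le_iff₀ hpos]
    nlinarith [le_abs_self C, mul_le_mul_of_nonneg_left (le_abs_self C) (by linarith : 0 ≤ A - B),
      mul_pos (sub_pos.2 hlt) (sub_pos.2 hlt)]
  linarith

section helpers

variable {E : Type*} [NormedAddCommGroup E] [InnerProductSpace ℝ E]

lemma convex_seg {G : E → ℝ} (hG : ConvexOn ℝ Set.univ G) (a b : E) {t : ℝ} (h0 : 0 < t)
    (h1 : t < 1) : G (a + t • (b - a)) ≤ (1 - t) * G a + t * G b := by
  have h := hG.2 (Set.mem_univ a) (Set.mem_univ b) (by linarith : 0 ≤ 1 - t) h0.le (by ring)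
  have e : (1 - t) • a + t • b = a + t • (b - a) := by module
  rw [e] at h
  simpa using h

lemma norm_seg (a v : E) (t : ℝ) :
    ‖a + t • v‖ ^ 2 = ‖a‖ ^ 2 + 2 * t * ⟪a, v⟫ + t ^ 2 * ‖v‖ ^ 2 := by
  rw [norm_add_sq_real, inner_smul_right, norm_smul, mul_pow, Real.norm_eq_abs, sq_abs]
  ring

lemma prox_sub {G : E → ℝ} (hG : ConvexOn ℝ Set.univ G) {σ : ℝ} (hσ : 0 < σ) {z q : E}
    (h : IsProxPt σ G z q) : IsSubgradientAt G q ((1 / σ) • (z - q)) := by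
  intro y
  have key : σ * G q + ⟪z - q, y - q⟫ ≤ σ * G y := by
    apply aux_lim_s8 _ _ (‖y - q‖ ^ 2 / 2)
    intro t h0 h1
    have hp := h (q + t • (y - q))
    have hc := mul_le_mul_of_nonneg_left (convex_seg hG q y h0 h1) hσ.le
    have e : q + t • (y - q) - z = (q - z) + t • (y - q) := by abel
    rw [e, norm_seg] at hp
    have e2 : ⟪z - q, y - q⟫ = -⟪q - z, y - q⟫ := by
      rw [← inner_neg_left, neg_sub]
    rw [e2]
    have : t * (σ * G q - ⟪q - z, y - q⟫) ≤ t * (σ * G y + t * (‖y - q‖ ^ 2 / 2)) := by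
      nlinarith
    have := le_of_mul_le_mul_left this h0
    linarith
  rw [inner_smul_left]
  simp only [one_div, map_inv₀, conj_trivial]
  have : σ * (G q + σ⁻¹ * ⟪z - q, y - q⟫) ≤ σ * G y := by
    rw [mul_add, mul_inv_cancel_left₀ hσ.ne']; exact key
  exact le_of_mul_le_mul_left this hσ

lemma sub_strong {G : E → ℝ} {μ : ℝ}
    (hG : ConvexOn ℝ Set.univ fun z => G z - μ / 2 * ‖z‖ ^ 2) {z r : E}
    (h : IsSubgradientAt G z r) (y : E) :
    G z + ⟪r, y - z⟫ + μ / 2 * ‖y - z‖ ^ 2 ≤ G y := by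
  apply aux_lim_s8 _ _ (μ / 2 * ‖y - z‖ ^ 2)
  intro t h0 h1
  have hs := h (z + t • (y - z))
  have hc := convex_seg hG z y h0 h1
  simp only [norm_seg] at hc
  rw [add_sub_cancel_left, inner_smul_right] at hs
  have e : ‖y‖ ^ 2 = ‖z‖ ^ 2 + 2 * ⟪z, y - z⟫ + ‖y - z‖ ^ 2 := by
    have := norm_seg z (y - z) 1
    simpa using this
  rw [e] at hc
  have : t * (G z + ⟪r, y - z⟫ + μ / 2 * ‖y - z‖ ^ 2) ≤
      t * (G y + t * (μ / 2 * ‖y - z‖ ^ 2)) := by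
    nlinarith
  exact le_of_mul_le_mul_left this h0

lemma sub_mono {G : E → ℝ} {μ : ℝ}
    (hG : ConvexOn ℝ Set.univ fun z => G z - μ / 2 * ‖z‖ ^ 2) {z r z' r' : E}
    (h : IsSubgradientAt G z r) (h' : IsSubgradientAt G z' r') :
    μ * ‖z - z'‖ ^ 2 ≤ ⟪z - z', r - r'⟫ := by
  have h1 := sub_strong hG h z'
  have h2 := sub_strong hG h' z
  have e : ⟪z - z', r - r'⟫ = - ⟪r, z' - z⟫ - ⟪r', z - z'⟫ := by
    rw [← neg_sub z z', inner_neg_right, inner_sub_right, real_inner_comm r, real_inner_comm r']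
    ring
  rw [norm_sub_rev z' z] at h1
  rw [e]; linarith

variable [FiniteDimensional ℝ E]

lemma grad_line {G : E → ℝ} {G' : E → E} (hg : ∀ z, HasGradientAt G (G' z) z) (z v : E) (t : ℝ) :
    HasDerivAt (fun s : ℝ => G (z + s • v)) ⟪G' (z + t • v), v⟫ t := by
  have h1 : HasDerivAt (fun s : ℝ => z + s • v) v t := by
    have := ((hasDerivAt_id t).smul_const v).const_add z
    simpa using this
  have h2 := (hg (z + t • v)).hasFDerivAt.comp_hasDerivAt t h1
  simp only [InnerProductSpace.toDual_apply_apply] at h2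
  exact h2

lemma grad_sub {G : E → ℝ} {G' : E → E} (hG : ConvexOn ℝ Set.univ G)
    (hg : ∀ z, HasGradientAt G (G' z) z) (z : E) : IsSubgradientAt G z (G' z) := by
  intro y
  have hd := grad_line hg z (y - z) 0
  have hc : ConvexOn ℝ Set.univ (fun s : ℝ => G (z + s • (y - z))) := by
    have := hG.comp_affineMap (AffineMap.lineMap z y : ℝ →ᵃ[ℝ] E)
    refine (this.congr ?_)
    intro s _
    simp [AffineMap.lineMap_apply, add_comm]
  have := hc.le_slope_of_hasDerivAt (Set.mem_univ 0) (Set.mem_univ 1) one_pos hd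
  simp [slope_def_field] at this
  linarith

lemma sub_unique {G : E → ℝ} {G' : E → E} (hg : ∀ z, HasGradientAt G (G' z) z) {z r : E}
    (h : IsSubgradientAt G z r) : r = G' z := by
  have hd := (grad_line hg z (r - G' z) 0).sub ((hasDerivAt_id (0:ℝ)).mul_const ⟪r, r - G' z⟫)
  have hm : IsLocalMin ((fun s : ℝ => G (z + s • (r - G' z))) -
      fun s => id s * ⟪r, r - G' z⟫) 0 := by
    refine Filter.Eventually.of_forall fun s => ?_
    have := h (z + s • (r - G' z))
    rw [add_sub_cancel_left, inner_smul_right] at this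
    simp only [Pi.sub_apply, id, zero_smul, add_zero, zero_mul, sub_zero]
    linarith
  have h0 := hm.hasDerivAt_eq_zero hd
  simp only [zero_smul, add_zero, one_mul] at h0
  have : ⟪r - G' z, r - G' z⟫ = 0 := by
    rw [inner_sub_left]; linarith
  exact sub_eq_zero.1 (inner_self_eq_zero.1 this)

lemma descent_s8 {G : E → ℝ} {G' : E → E} {L : ℝ}
    (hg : ∀ z, HasGradientAt G (G' z) z) (hl : ∀ z z', ‖G' z - G' z'‖ ≤ L * ‖z - z'‖) (z v : E) :
    G (z + v) ≤ G z + ⟪G' z, v⟫ + L / 2 * ‖v‖ ^ 2 := by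
  have hd : ∀ t : ℝ, HasDerivAt (fun s : ℝ => G (z + s • v) - s * ⟪G' z, v⟫
      - s ^ 2 * (L / 2 * ‖v‖ ^ 2)) (⟪G' (z + t • v), v⟫ - ⟪G' z, v⟫ - 2 * t * (L / 2 * ‖v‖ ^ 2)) t := by
    intro t
    have h1 := (hasDerivAt_id t).mul_const ⟪G' z, v⟫
    have h2 := (hasDerivAt_pow 2 t).mul_const (L / 2 * ‖v‖ ^ 2)
    have := ((grad_line hg z v t).sub h1).sub h2
    refine this.congr_deriv ?_
    simp
  have ha : AntitoneOn (fun s : ℝ => G (z + s • v) - s * ⟪G' z, v⟫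
      - s ^ 2 * (L / 2 * ‖v‖ ^ 2)) (Set.Icc 0 1) := by
    apply antitoneOn_of_deriv_nonpos (convex_Icc 0 1)
    · exact fun t _ => (hd t).continuousAt.continuousWithinAt
    · exact fun t _ => (hd t).differentiableAt.differentiableWithinAt
    · intro t ht
      rw [interior_Icc] at ht
      rw [(hd t).deriv, ← inner_sub_left]
      have h1 := real_inner_le_norm (G' (z + t • v) - G' z) v
      have h2 := hl (z + t • v) z
      rw [add_sub_cancel_left, norm_smul, Real.norm_eq_abs, abs_of_pos ht.1] at h2
      have h3 := mul_le_mul_of_nonneg_right h2 (norm_nonneg v)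
      nlinarith
  have := ha (Set.left_mem_Icc.2 zero_le_one) (Set.right_mem_Icc.2 zero_le_one) zero_le_one
  simp at this
  linarith

lemma coco_half {G : E → ℝ} {G' : E → E} {L : ℝ} (hL : 0 < L) (hG : ConvexOn ℝ Set.univ G)
    (hg : ∀ z, HasGradientAt G (G' z) z) (hl : ∀ z z', ‖G' z - G' z'‖ ≤ L * ‖z - z'‖) (z y : E) :
    G z + ⟪G' z, y - z⟫ + 1 / (2 * L) * ‖G' y - G' z‖ ^ 2 ≤ G y := by
  have h1 := grad_sub hG hg z (y + (-(1 / L)) • (G' y - G' z))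
  have h2 := descent_s8 hg hl y ((-(1 / L)) • (G' y - G' z))
  have e : y + (-(1 / L)) • (G' y - G' z) - z = (y - z) + (-(1 / L)) • (G' y - G' z) := by abel
  rw [e, inner_add_right, inner_smul_right] at h1
  rw [inner_smul_right, norm_smul, mul_pow, Real.norm_eq_abs, sq_abs] at h2
  have e2 : ⟪G' y, G' y - G' z⟫ - ⟪G' z, G' y - G' z⟫ = ‖G' y - G' z‖ ^ 2 := by
    rw [← inner_sub_left, real_inner_self_eq_norm_sq]
  have e3 : L / 2 * ((-(1 / L)) ^ 2 * ‖G' y - G' z‖ ^ 2) = 1 / (2 * L) * ‖G' y - G' z‖ ^ 2 := by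
    field_simp
  have e4 : 1 / L * ‖G' y - G' z‖ ^ 2 = 2 * (1 / (2 * L) * ‖G' y - G' z‖ ^ 2) := by
    field_simp
  rw [e3] at h2
  rw [← e2, mul_sub] at e4
  rw [e2] at e4
  linarith

lemma coco {G : E → ℝ} {G' : E → E} {L : ℝ} (hL : 0 < L) (hG : ConvexOn ℝ Set.univ G)
    (hg : ∀ z, HasGradientAt G (G' z) z) (hl : ∀ z z', ‖G' z - G' z'‖ ≤ L * ‖z - z'‖) (z y : E) :
    ‖G' y - G' z‖ ^ 2 ≤ L * ⟪y - z, G' y - G' z⟫ := by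
  have h1 := coco_half hL hG hg hl z y
  have h2 := coco_half hL hG hg hl y z
  have e : ⟪y - z, G' y - G' z⟫ = - ⟪G' y, z - y⟫ - ⟪G' z, y - z⟫ := by
    rw [← neg_sub y z, inner_neg_right, inner_sub_right, real_inner_comm (G' y),
      real_inner_comm (G' z)]
    ring
  rw [norm_sub_rev (G' z)] at h2
  have h3 : 2 * (1 / (2 * L) * ‖G' y - G' z‖ ^ 2) ≤ ⟪y - z, G' y - G' z⟫ := by
    rw [e]; linarith
  have h4 := mul_le_mul_of_nonneg_left h3 hL.le
  have e4 : L * (2 * (1 / (2 * L) * ‖G' y - G' z‖ ^ 2)) = ‖G' y - G' z‖ ^ 2 := by field_simp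
  linarith

end helpers

section step

variable {𝒳 𝒰 : Type*}
    [NormedAddCommGroup 𝒳] [InnerProductSpace ℝ 𝒳] [FiniteDimensional ℝ 𝒳]
    [NormedAddCommGroup 𝒰] [InnerProductSpace ℝ 𝒰] [FiniteDimensional ℝ 𝒰]

/-- Lyapunov function. -/
def pddyV (K : 𝒳 →L[ℝ] 𝒰) (γ η : ℝ) (a : 𝒳) (d : 𝒰) : ℝ :=
  ‖a + γ • (ContinuousLinearMap.adjoint K) d‖^2 + γ^2 * η * ‖d‖^2
          - γ^2 * ‖(ContinuousLinearMap.adjoint K) d‖^2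

lemma adj_bound (K : 𝒳 →L[ℝ] 𝒰) {η : ℝ} (hη : ‖K‖ ^ 2 ≤ η) (d : 𝒰) :
    ‖(ContinuousLinearMap.adjoint K) d‖ ^ 2 ≤ η * ‖d‖ ^ 2 := by
  have h1 := (ContinuousLinearMap.adjoint K).le_opNorm d
  rw [LinearIsometryEquiv.norm_map] at h1
  calc _ ≤ (‖K‖ * ‖d‖) ^ 2 := by gcongr
    _ = ‖K‖ ^ 2 * ‖d‖ ^ 2 := by ring
    _ ≤ _ := by gcongr

lemma pddyV_nonneg (K : 𝒳 →L[ℝ] 𝒰) {η : ℝ} (hη : ‖K‖ ^ 2 ≤ η) (γ : ℝ) (a : 𝒳) (d : 𝒰) :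
    0 ≤ pddyV K γ η a d := by
  have := mul_le_mul_of_nonneg_left (adj_bound K hη d) (sq_nonneg γ)
  unfold pddyV
  nlinarith [sq_nonneg ‖a + γ • (ContinuousLinearMap.adjoint K) d‖]

lemma pddy_step (K : 𝒳 →L[ℝ] 𝒰) {γ η LF LH μR : ℝ} (hη : ‖K‖ ^ 2 ≤ η) (hγ : 0 < γ)
    (hγ2 : γ * LF ≤ 2) (hLH : 0 < LH) (hLF : 0 < LF) (hμR : 0 ≤ μR)
    {a b g a' : 𝒳} {d d' : 𝒰}
    (hb : b = a - γ • ((ContinuousLinearMap.adjoint K) d' - (ContinuousLinearMap.adjoint K) d))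
    (h1 : ‖d'‖ ^ 2 ≤ LH * ⟪d', (γ * η) • (d - d') + K a⟫)
    (h2 : γ * μR * ‖a'‖ ^ 2 ≤ ⟪a', b - a' - γ • g - γ • (ContinuousLinearMap.adjoint K) d'⟫)
    (h3 : ‖g‖ ^ 2 ≤ LF * ⟪b, g⟫) :
    pddyV K γ η a' d' + (‖b - γ • g - a'‖ ^ 2 + γ * (2 - γ * LF) * ⟪b, g⟫
      + 2 * γ * μR * ‖a'‖ ^ 2 + 2 * γ / LH * ‖d'‖ ^ 2) ≤ pddyV K γ η a d ∧
    ‖b - γ • g‖ ^ 2 ≤ ‖b‖ ^ 2 ∧ ‖a'‖ ^ 2 ≤ 2 * pddyV K γ η a d := by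
  have ha : a = b + γ • ((ContinuousLinearMap.adjoint K) d' - (ContinuousLinearMap.adjoint K) d) := by
    rw [hb]; abel
  have hQ := adj_bound K hη (d - d')
  have hQ' := adj_bound K hη d'
  have hg : γ ^ 2 * ‖g‖ ^ 2 ≤ γ ^ 2 * LF * ⟪b, g⟫ := by
    rw [mul_assoc]; exact mul_le_mul_of_nonneg_left h3 (sq_nonneg γ)
  have hbg : 0 ≤ ⟪b, g⟫ := by
    have : 0 ≤ LF * ⟪b, g⟫ := le_trans (sq_nonneg _) h3
    exact nonneg_of_mul_nonneg_right this hLF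
  have hbg2 : 0 ≤ γ * (2 - γ * LF) * ⟪b, g⟫ :=
    mul_nonneg (mul_nonneg hγ.le (by linarith)) hbg
  have h1' : 2 * γ / LH * ‖d'‖ ^ 2 ≤ 2 * γ * ⟪d', (γ * η) • (d - d') + K a⟫ := by
    rw [div_mul_eq_mul_div, div_le_iff₀ hLH]
    nlinarith
  have h1n : 0 ≤ 2 * γ / LH * ‖d'‖ ^ 2 := by positivity
  have hadj : ⟪d', K a⟫ = ⟪(ContinuousLinearMap.adjoint K) d', a⟫ :=
    (ContinuousLinearMap.adjoint_inner_left K a d').symm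
  rw [inner_add_right, hadj] at h1'
  rw [map_sub] at hQ
  have hN : ‖b - γ • g‖ ^ 2 ≤ ‖b‖ ^ 2 := by
    rw [norm_sub_sq_real, norm_smul, mul_pow, Real.norm_eq_abs, sq_abs, inner_smul_right]
    linarith
  have hμ : 0 ≤ γ * μR * ‖a'‖ ^ 2 := by positivity
  unfold pddyV
  subst ha
  clear hb
  generalize (ContinuousLinearMap.adjoint K) d' = q' at *
  generalize (ContinuousLinearMap.adjoint K) d = q at *
  have hQγ := mul_le_mul_of_nonneg_left hQ (sq_nonneg γ)
  have hQγ' := mul_le_mul_of_nonneg_left hQ' (sq_nonneg γ)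
  have e1 : b + γ • (q' - q) + γ • q = b + γ • q' := by module
  rw [e1]
  refine ⟨?_, hN, ?_⟩
  · simp only [← real_inner_self_eq_norm_sq, inner_add_left, inner_add_right, inner_sub_left,
      inner_sub_right, real_inner_smul_left, real_inner_smul_right] at *
    simp only [real_inner_comm b q', real_inner_comm b g, real_inner_comm b a', real_inner_comm a' g,
      real_inner_comm a' q', real_inner_comm q q', real_inner_comm d d'] at *
    nlinarith
  · have hc : ‖a'‖ ^ 2 ≤ ‖b - γ • g - γ • q'‖ ^ 2 := by
      have e : b - a' - γ • g - γ • q' = (b - γ • g - γ • q') - a' := by abel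
      rw [e, inner_sub_right, real_inner_self_eq_norm_sq] at h2
      have := norm_sub_sq_real a' (b - γ • g - γ • q')
      nlinarith [sq_nonneg ‖a' - (b - γ • g - γ • q')‖]
    have hc2 : ‖b - γ • g - γ • q'‖ ^ 2 ≤ 2 * ‖b - γ • g‖ ^ 2 + 2 * ‖γ • q'‖ ^ 2 := by
      have i1 := norm_sub_sq_real (b - γ • g) (γ • q')
      have i2 := norm_add_sq_real (b - γ • g) (γ • q')
      nlinarith [sq_nonneg ‖b - γ • g + γ • q'‖]
    have hc3 : ‖b‖ ^ 2 + ‖γ • q'‖ ^ 2 ≤ ‖b + γ • q'‖ ^ 2 + γ ^ 2 * η * ‖d‖ ^ 2 - γ ^ 2 * ‖q‖ ^ 2 := by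
      clear hc hc2 h2 hN h3 hg h1
      have h1'' := h1n.trans h1'
      clear h1' h1n
      simp only [← real_inner_self_eq_norm_sq, inner_add_left, inner_add_right, inner_sub_left,
        inner_sub_right, real_inner_smul_left, real_inner_smul_right] at *
      rw [real_inner_comm q' q, real_inner_comm d' d] at *
      rw [real_inner_comm b q'] at *
      nlinarith
    linarith

lemma pddy_contr (K : 𝒳 →L[ℝ] 𝒰) {γ η LF LH μF μR : ℝ} (hη : ‖K‖ ^ 2 ≤ η) (hγ : 0 < γ)
    (hγ2 : γ * LF < 2) (hLH : 0 < LH) (hLF : 0 < LF) (hμF : 0 ≤ μF) (hμR : 0 ≤ μR)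
    (hμ : 0 < μF + μR)
    {a b g : ℕ → 𝒳} {d : ℕ → 𝒰}
    (hb : ∀ k, b k = a k - γ • ((ContinuousLinearMap.adjoint K) (d (k+1))
      - (ContinuousLinearMap.adjoint K) (d k)))
    (h1 : ∀ k, ‖d (k+1)‖ ^ 2 ≤ LH * ⟪d (k+1), (γ * η) • (d k - d (k+1)) + K (a k)⟫)
    (h2 : ∀ k, γ * μR * ‖a (k+1)‖ ^ 2 ≤ ⟪a (k+1), b k - a (k+1) - γ • g k
      - γ • (ContinuousLinearMap.adjoint K) (d (k+1))⟫)
    (h3 : ∀ k, ‖g k‖ ^ 2 ≤ LF * ⟪b k, g k⟫)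
    (h4 : ∀ k, μF * ‖b k‖ ^ 2 ≤ ⟪b k, g k⟫) :
    ∃ ρ : ℝ, 0 < ρ ∧ ρ ≤ 1 ∧ ∀ k : ℕ,
      ‖a (k+1)‖^2 ≤ 4 * (1 - ρ)^k * pddyV K γ η (a 0) (d 0) := by
  have hη0 : 0 ≤ η := le_trans (sq_nonneg _) hη
  have hs := fun k => pddy_step K hη hγ hγ2.le hLH hLF hμR (hb k) (h1 k) (h2 k) (h3 k)
  have hbg : ∀ k, 0 ≤ ⟪b k, g k⟫ := fun k =>
    le_trans (mul_nonneg hμF (sq_nonneg _)) (h4 k)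
  have hτ : 0 < γ * (2 - γ * LF) := mul_pos hγ (by linarith)
  obtain ⟨C1, hC1, hC⟩ : ∃ C1 : ℝ, 0 < C1 ∧ ∀ k, ‖a (k+1)‖ ^ 2 ≤
      C1 * (pddyV K γ η (a k) (d k) - pddyV K γ η (a (k+1)) (d (k+1))) := by
    rcases hμR.lt_or_eq with hR | hR
    · refine ⟨1 / (2 * γ * μR), by positivity, fun k => ?_⟩
      rw [div_mul_eq_mul_div, one_mul, le_div_iff₀ (by positivity)]
      have p1 := mul_nonneg hτ.le (hbg k)
      have p2 : 0 ≤ 2 * γ / LH * ‖d (k+1)‖ ^ 2 := by positivity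
      have p3 := sq_nonneg ‖b k - γ • g k - a (k+1)‖
      have := (hs k).1
      linarith
    · have hF : 0 < μF := by linarith
      refine ⟨2 / (γ * (2 - γ * LF) * μF) + 2, by positivity, fun k => ?_⟩
      have p1 := mul_nonneg hτ.le (hbg k)
      have p2 : 0 ≤ 2 * γ / LH * ‖d (k+1)‖ ^ 2 := by positivity
      have p3 := sq_nonneg ‖b k - γ • g k - a (k+1)‖
      have p4 : 0 ≤ 2 * γ * μR * ‖a (k+1)‖ ^ 2 := by positivity
      have p5 := mul_le_mul_of_nonneg_left (h4 k) hτ.le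
      obtain ⟨s1, s2, -⟩ := hs k
      have q1 : ‖b k‖ ^ 2 ≤ 1 / (γ * (2 - γ * LF) * μF) *
          (pddyV K γ η (a k) (d k) - pddyV K γ η (a (k+1)) (d (k+1))) := by
        rw [div_mul_eq_mul_div, one_mul, le_div_iff₀ (by positivity)]
        linarith
      have q2 : ‖a (k+1)‖ ^ 2 ≤ 2 * ‖b k - γ • g k‖ ^ 2 + 2 * ‖b k - γ • g k - a (k+1)‖ ^ 2 := by
        have e : a (k+1) = (b k - γ • g k) - (b k - γ • g k - a (k+1)) := by abel
        have i1 := norm_sub_sq_real (b k - γ • g k) (b k - γ • g k - a (k+1))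
        have i2 := norm_add_sq_real (b k - γ • g k) (b k - γ • g k - a (k+1))
        rw [← e] at i1
        nlinarith [sq_nonneg ‖b k - γ • g k + (b k - γ • g k - a (k+1))‖]
      have e : (2 : ℝ) / (γ * (2 - γ * LF) * μF) = 2 * (1 / (γ * (2 - γ * LF) * μF)) := by ring
      rw [e, add_mul, mul_assoc]
      linarith
  set C := 2 * C1 + 2 * γ ^ 2 * η * (LH / (2 * γ)) with hCdef
  have hCpos : 0 < C := by positivity
  have hV : ∀ k, pddyV K γ η (a (k+1)) (d (k+1)) ≤
      C * (pddyV K γ η (a k) (d k) - pddyV K γ η (a (k+1)) (d (k+1))) := by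
    intro k
    have hd : ‖d (k+1)‖ ^ 2 ≤ LH / (2 * γ) *
        (pddyV K γ η (a k) (d k) - pddyV K γ η (a (k+1)) (d (k+1))) := by
      have p1 := mul_nonneg hτ.le (hbg k)
      have p3 := sq_nonneg ‖b k - γ • g k - a (k+1)‖
      have p4 : 0 ≤ 2 * γ * μR * ‖a (k+1)‖ ^ 2 := by positivity
      have s1 := (hs k).1
      have : 2 * γ / LH * ‖d (k+1)‖ ^ 2 ≤
        pddyV K γ η (a k) (d k) - pddyV K γ η (a (k+1)) (d (k+1)) := by linarith
      have := mul_le_mul_of_nonneg_left this (by positivity : 0 ≤ LH / (2 * γ))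
      have e : LH / (2 * γ) * (2 * γ / LH * ‖d (k+1)‖ ^ 2) = ‖d (k+1)‖ ^ 2 := by field_simp
      linarith
    have hup : pddyV K γ η (a (k+1)) (d (k+1)) ≤
        2 * ‖a (k+1)‖ ^ 2 + 2 * γ ^ 2 * η * ‖d (k+1)‖ ^ 2 := by
      unfold pddyV
      have hQ := mul_le_mul_of_nonneg_left (adj_bound K hη (d (k+1))) (sq_nonneg γ)
      have i1 := norm_add_sq_real (a (k+1)) (γ • (ContinuousLinearMap.adjoint K) (d (k+1)))
      have i2 := norm_sub_sq_real (a (k+1)) (γ • (ContinuousLinearMap.adjoint K) (d (k+1)))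
      have e : ‖γ • (ContinuousLinearMap.adjoint K) (d (k+1))‖ ^ 2 =
          γ ^ 2 * ‖(ContinuousLinearMap.adjoint K) (d (k+1))‖ ^ 2 := by
        rw [norm_smul, mul_pow, Real.norm_eq_abs, sq_abs]
      nlinarith [sq_nonneg ‖a (k+1) - γ • (ContinuousLinearMap.adjoint K) (d (k+1))‖]
    have := mul_le_mul_of_nonneg_left hd (by positivity : 0 ≤ 2 * γ ^ 2 * η)
    have := hC k
    rw [hCdef, add_mul, mul_assoc 2 C1, mul_assoc _ (LH / (2 * γ))]
    linarith
  have hρ : 1 - 1 / (1 + C) = C / (1 + C) := by field_simp; ring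
  refine ⟨1 / (1 + C), by positivity, by rw [div_le_one (by positivity)]; linarith, ?_⟩
  have hpow : ∀ k, pddyV K γ η (a k) (d k) ≤ (1 - 1 / (1 + C)) ^ k * pddyV K γ η (a 0) (d 0) := by
    intro k
    induction k with
    | zero => simp
    | succ k ih =>
      have h := hV k
      have : pddyV K γ η (a (k+1)) (d (k+1)) ≤ (1 - 1 / (1 + C)) * pddyV K γ η (a k) (d k) := by
        rw [hρ, div_mul_eq_mul_div, le_div_iff₀ (by positivity)]
        linarith
      rw [pow_succ', mul_assoc]
      refine this.trans (mul_le_mul_of_nonneg_left ih ?_)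
      rw [hρ]; positivity
  intro k
  have := (hs k).2.2
  have := hpow k
  have := pddyV_nonneg K hη γ (a k) (d k)
  linarith

end step

/-- Theorem 5, second part: linear convergence of the PDDY algorithm when
`μ_F + μ_R > 0` and `H` is `L_H`-smooth. -/
theorem pddy_linear_convergence
    {𝒳 𝒰 : Type*}
    [NormedAddCommGroup 𝒳] [InnerProductSpace ℝ 𝒳] [FiniteDimensional ℝ 𝒳]
    [NormedAddCommGroup 𝒰] [InnerProductSpace ℝ 𝒰] [FiniteDimensional ℝ 𝒰]
    (K : 𝒳 →L[ℝ] 𝒰)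
    (F R : 𝒳 → ℝ) (H : 𝒰 → ℝ) (F' : 𝒳 → 𝒳) (L_F : ℝ)
    (hLF : 0 < L_F)
    (hFconv : ConvexOn ℝ Set.univ F)
    (hRconv : ConvexOn ℝ Set.univ R)
    (hHconv : ConvexOn ℝ Set.univ H)
    (hFgrad : ∀ z, HasGradientAt F (F' z) z)
    (hFlip : ∀ z z', ‖F' z - F' z'‖ ≤ L_F * ‖z - z'‖)
    -- strong convexity
    (μF μR : ℝ) (hμF : 0 ≤ μF) (hμR : 0 ≤ μR) (hμ : 0 < μF + μR)
    (hFsc : ConvexOn ℝ Set.univ fun z => F z - μF / 2 * ‖z‖ ^ 2)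
    (hRsc : ConvexOn ℝ Set.univ fun z => R z - μR / 2 * ‖z‖ ^ 2)
    -- H is L_H-smooth
    (H' : 𝒰 → 𝒰) (L_H : ℝ) (hLH : 0 < L_H)
    (hHgrad : ∀ v, HasGradientAt H (H' v) v)
    (hHlip : ∀ v v', ‖H' v - H' v'‖ ≤ L_H * ‖v - v'‖)
    -- x* is the (unique) minimizer of Ψ, and Assumption 1 holds
    (xstar : 𝒳)
    (hxstar : ∀ y, F xstar + R xstar + H (K xstar) ≤ F y + R y + H (K y))
    (rstar : 𝒳)
    (hrstar : IsSubgradientAt R xstar rstar)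
    (hopt : F' xstar + rstar
      + (ContinuousLinearMap.adjoint K) (H' (K xstar)) = 0)
    -- u* is the (unique) dual solution
    (ustar : 𝒰) (hustar : ustar = H' (K xstar))
    -- parameters
    (γ η : ℝ) (hγ0 : 0 < γ) (hγ2 : γ < 2 / L_F) (hη : ‖K‖ ^ 2 ≤ η)
    -- PDDY iterates
    (x xR : ℕ → 𝒳) (u : ℕ → 𝒰) (p : ℕ → 𝒳)
    (hp : ∀ k, p k = (ContinuousLinearMap.adjoint K) (u k))
    (hu : ∀ k, ∃ w, IsProxPt (γ*η) H
        ((γ*η) • (u k + (1/(γ*η)) • K (xR k))) w ∧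
      u (k+1) = (u k + (1/(γ*η)) • K (xR k)) - (1/(γ*η)) • w)
    (hxit : ∀ k, x (k+1) = xR k - γ • (p (k+1) - p k))
    (hxR : ∀ k, IsProxPt γ R
      (x (k+1) - γ • F' (x (k+1)) - γ • p (k+1)) (xR (k+1))) :
    ∃ ρ : ℝ, 0 < ρ ∧ ρ ≤ 1 ∧ ∀ k : ℕ,
      ‖xR (k+1) - xstar‖^2 ≤ 4 * (1 - ρ)^k *
        (‖xR 0 - xstar + γ • (ContinuousLinearMap.adjoint K) (u 0 - ustar)‖^2
          + γ^2 * η * ‖u 0 - ustar‖^2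
          - γ^2 * ‖(ContinuousLinearMap.adjoint K) (u 0 - ustar)‖^2) := by
  have hη0 : 0 ≤ η := le_trans (sq_nonneg _) hη
  have hγLF : γ * L_F < 2 := by rwa [lt_div_iff₀ hLF] at hγ2
  have hgF := grad_sub hFconv hFgrad
  have h3 : ∀ k, ‖F' (x (k+1)) - F' xstar‖ ^ 2 ≤
      L_F * ⟪x (k+1) - xstar, F' (x (k+1)) - F' xstar⟫ :=
    fun k => coco hLF hFconv hFgrad hFlip _ _
  have h4 : ∀ k, μF * ‖x (k+1) - xstar‖ ^ 2 ≤ ⟪x (k+1) - xstar, F' (x (k+1)) - F' xstar⟫ :=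
    fun k => sub_mono hFsc (hgF _) (hgF _)
  have h2 : ∀ k, γ * μR * ‖xR (k+1) - xstar‖ ^ 2 ≤ ⟪xR (k+1) - xstar,
      (x (k+1) - xstar) - (xR (k+1) - xstar) - γ • (F' (x (k+1)) - F' xstar)
      - γ • (ContinuousLinearMap.adjoint K) (u (k+1) - ustar)⟫ := by
    intro k
    have h := mul_le_mul_of_nonneg_left
      (sub_mono hRsc (prox_sub hRconv hγ0 (hxR k)) hrstar) hγ0.le
    rw [← real_inner_smul_right, ← mul_assoc] at h
    refine h.trans_eq (congrArg _ ?_)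
    have hr : rstar = - F' xstar - (ContinuousLinearMap.adjoint K) ustar := by
      rw [hustar, eq_sub_iff_add_eq, eq_neg_iff_add_eq_zero, ← hopt]; abel
    rw [hr, hp (k+1), map_sub, smul_sub γ ((1 / γ) • _), smul_smul, mul_one_div_cancel hγ0.ne',
      one_smul]
    module
  rcases hη0.lt_or_eq with hηpos | hηz
  · have hγη : 0 < γ * η := mul_pos hγ0 hηpos
    have h1 : ∀ k, ‖u (k+1) - ustar‖ ^ 2 ≤ L_H * ⟪u (k+1) - ustar,
        (γ * η) • ((u k - ustar) - (u (k+1) - ustar)) + K (xR k - xstar)⟫ := by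
      intro k
      obtain ⟨w, hw, huk⟩ := hu k
      have hsub := sub_unique hHgrad (prox_sub hHconv hγη hw)
      have e1 : u (k+1) = H' w := by
        rw [← hsub, huk, smul_sub (1 / (γ * η)), smul_smul _ (γ * η),
          one_div_mul_cancel hγη.ne', one_smul]
      have e2 : (γ * η) • ((u k - ustar) - (u (k+1) - ustar)) + K (xR k - xstar)
          = w - K xstar := by
        rw [huk, map_sub, sub_sub_sub_cancel_right, smul_sub, smul_sub, smul_add, smul_smul,
          smul_smul, mul_one_div_cancel hγη.ne', one_smul, one_smul]
        abel
      rw [e2, e1, hustar, real_inner_comm]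
      exact coco hLH hHconv hHgrad hHlip _ _
    have hb : ∀ k, x (k+1) - xstar = (xR k - xstar) -
        γ • ((ContinuousLinearMap.adjoint K) (u (k+1) - ustar)
          - (ContinuousLinearMap.adjoint K) (u k - ustar)) := by
      intro k
      rw [hxit, hp, hp, map_sub, map_sub]
      module
    obtain ⟨ρ, hρ0, hρ1, hρ⟩ := pddy_contr K hη hγ0 hγLF hLH hLF hμF hμR hμ
      (a := fun k => xR k - xstar) (b := fun k => x (k+1) - xstar)
      (g := fun k => F' (x (k+1)) - F' xstar) (d := fun k => u k - ustar) hb h1 h2 h3 h4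
    exact ⟨ρ, hρ0, hρ1, hρ⟩
  · have hK : K = 0 := by
      rw [← hηz] at hη
      exact norm_eq_zero.1 (pow_eq_zero_iff two_ne_zero |>.1 (le_antisymm hη (sq_nonneg _)))
    have hA : ∀ v, (ContinuousLinearMap.adjoint K) v = 0 := by
      intro v; rw [hK, map_zero]; rfl
    obtain ⟨ρ, hρ0, hρ1, hρ⟩ := pddy_contr K hη hγ0 hγLF hLH hLF hμF hμR hμ
      (a := fun k => xR k - xstar) (b := fun k => x (k+1) - xstar)
      (g := fun k => F' (x (k+1)) - F' xstar) (d := fun _ => (0 : 𝒰))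
      (by intro k; simp [hxit, hp, hA]) (by intro k; simp)
      (by intro k; simpa [hA] using h2 k) h3 h4
    refine ⟨ρ, hρ0, hρ1, fun k => ?_⟩
    simpa [pddyV, hA, ← hηz] using hρ k
end
end
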